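/- Let p and q be positive integers and let τ be a permutation of [p+q] such that τ(p) = p+1. Then τ ∈ S_ann-nc(p,q) if and only if #(τ) + #(τ⁻¹γ) = p+q. -/

import Mathlib

/-- The permutation induced by `f` on the subset `B`: an element `b` is sent to the first
element of the sequence `f b, f (f b), f (f (f b)), ...` that lies in `B`
(and is left fixed if no iterate ever returns to `B`). -/
noncomputable def induced {α : Type*} (f : α → α) (B : Set α) (b : α) : α := by
  classical
  exact if h : ∃ k, 0 < k ∧ f^[k] b ∈ B then f^[Nat.find h] b else b

/-- `A` is an orbit of the permutation `τ`. -/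
def IsOrbit {α : Type*} (τ : Equiv.Perm α) (A : Set α) : Prop :=
  ∃ a, A = {b | τ.SameCycle a b}

/-- The number of orbits of `τ` (fixed points count as orbits). -/
noncomputable def numOrbits {α : Type*} (τ : Equiv.Perm α) : ℕ :=
  Set.ncard {A : Set α | IsOrbit τ A}

/-- `induced f S` acts on `a, b, c` as the 3-cycle `(a, b, c)`. -/
def MapsCyc3 {α : Type*} (f : α → α) (S : Set α) (a b c : α) : Prop :=
  induced f S a = b ∧ induced f S b = c ∧ induced f S c = a

/-- `induced f S` acts on `a, b, c, d` as the 4-cycle `(a, b, c, d)`. -/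
def MapsCyc4 {α : Type*} (f : α → α) (S : Set α) (a b c d : α) : Prop :=
  induced f S a = b ∧ induced f S b = c ∧ induced f S c = d ∧ induced f S d = a

/-- `induced f S` acts on `a, b, c, d` as the product of transpositions `(a, c)(b, d)`. -/
def MapsSwap2 {α : Type*} (f : α → α) (S : Set α) (a b c d : α) : Prop :=
  induced f S a = c ∧ induced f S c = a ∧ induced f S b = d ∧ induced f S d = b

/-- `induced f S` acts on `x, y` as the transposition `(x, y)`. -/
def MapsSwap {α : Type*} (f : α → α) (S : Set α) (x y : α) : Prop :=
  induced f S x = y ∧ induced f S y = x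

/-- `σ` is standard with respect to the "forward cycle" `γ₀`, i.e. `σ∣B = γ₀∣B` for
every orbit `B` of `σ`. -/
def DiscStandardRel {n : ℕ} (γ₀ σ : Equiv.Perm (Fin n)) : Prop :=
  ∀ A : Set (Fin n), IsOrbit σ A → ∀ b ∈ A, induced (⇑σ) A b = induced (⇑γ₀) A b

/-- The orbit partition of `σ` has no crossing: there are no `a < b < c < d` with
`a, c` in one orbit and `b, d` in a different orbit. -/
def OrbitsNoCrossing {n : ℕ} (σ : Equiv.Perm (Fin n)) : Prop :=
  ¬ ∃ a b c d : Fin n, a < b ∧ b < c ∧ c < d ∧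
      σ.SameCycle a c ∧ σ.SameCycle b d ∧ ¬ σ.SameCycle a b

/-- Disc non-crossing relative to a given forward cycle `γ₀`. -/
def DiscNCRel {n : ℕ} (γ₀ σ : Equiv.Perm (Fin n)) : Prop :=
  DiscStandardRel γ₀ σ ∧ OrbitsNoCrossing σ

/-- The set `S_disc-nc(n)` of disc non-crossing permutations of `[n]`
(here `[n] = {1, …, n}` is modelled by `Fin n`, and the forward cycle
`γ₀ = (1, 2, …, n)` is `finRotate n`). -/
def DiscNC {n : ℕ} (σ : Equiv.Perm (Fin n)) : Prop :=
  DiscNCRel (finRotate n) σ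

/-- The external points `{1, …, p}` (0-indexed: values `< p`). -/
def extSet (p q : ℕ) : Set (Fin (p + q)) := {i | (i : ℕ) < p}

/-- The internal points `{p+1, …, p+q}` (0-indexed: values `≥ p`). -/
def intSet (p q : ℕ) : Set (Fin (p + q)) := {i | p ≤ (i : ℕ)}

/-- `γ_ext = (1, 2, …, p)`, the forward cycle on the external points. -/
def gammaExt (p q : ℕ) : Equiv.Perm (Fin (p + q)) :=
  ((List.finRange (p + q)).take p).formPerm

/-- `γ_int = (p+1, p+2, …, p+q)`, the forward cycle on the internal points. -/
def gammaInt (p q : ℕ) : Equiv.Perm (Fin (p + q)) :=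
  ((List.finRange (p + q)).drop p).formPerm

/-- `γ = γ_ext · γ_int`. -/
def gammaAnn (p q : ℕ) : Equiv.Perm (Fin (p + q)) := gammaExt p q * gammaInt p q

/-- `λ_{x,y}`: the permutation fixing `x` and `y` and cycling the remaining points as
`(γ_ext(x), γ_ext²(x), …, γ_ext^{p-1}(x), γ_int(y), γ_int²(y), …, γ_int^{q-1}(y))`. -/
def lamPerm (p q : ℕ) (x y : Fin (p + q)) : Equiv.Perm (Fin (p + q)) :=
  (((List.range (p - 1)).map fun k => (gammaExt p q ^ (k + 1)) x) ++
    ((List.range (q - 1)).map fun k => (gammaInt p q ^ (k + 1)) y)).formPerm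

/-- `τ` is standard in `(p,q)`-annular sense. -/
def AnnStandard (p q : ℕ) (τ : Equiv.Perm (Fin (p + q))) : Prop :=
  (∀ A : Set (Fin (p + q)), IsOrbit τ A →
    (∀ b ∈ A ∩ extSet p q,
        induced (⇑τ) (A ∩ extSet p q) b = induced (⇑(gammaExt p q)) (A ∩ extSet p q) b) ∧
    (∀ b ∈ A ∩ intSet p q,
        induced (⇑τ) (A ∩ intSet p q) b = induced (⇑(gammaInt p q)) (A ∩ intSet p q) b)) ∧
  (∀ A : Set (Fin (p + q)), IsOrbit τ A →
    (A ∩ extSet p q).Nonempty → (A ∩ intSet p q).Nonempty →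
    (∃! a, a ∈ A ∩ extSet p q ∧ τ a ∈ intSet p q) ∧
    (∃! a, a ∈ A ∩ intSet p q ∧ τ a ∈ extSet p q))

/-- The annular crossing pattern (AC-1). -/
def AC1 (p q : ℕ) (τ : Equiv.Perm (Fin (p + q))) : Prop :=
  ∃ a b c d : Fin (p + q), List.Pairwise (· ≠ ·) [a, b, c, d] ∧
    MapsCyc4 (⇑(gammaAnn p q)) {a, b, c, d} a b c d ∧
    MapsSwap2 (⇑τ) {a, b, c, d} a b c d

/-- The annular crossing pattern (AC-2). -/
def AC2 (p q : ℕ) (τ : Equiv.Perm (Fin (p + q))) : Prop :=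
  ∃ a b c x y : Fin (p + q), List.Pairwise (· ≠ ·) [a, b, c, x, y] ∧
    x ∈ extSet p q ∧ y ∈ intSet p q ∧
    MapsCyc3 (⇑(lamPerm p q x y)) {a, b, c} a b c ∧
    MapsCyc3 (⇑τ) {a, b, c, x, y} a c b ∧
    MapsSwap (⇑τ) {a, b, c, x, y} x y

/-- The annular crossing pattern (AC-3). -/
def AC3 (p q : ℕ) (τ : Equiv.Perm (Fin (p + q))) : Prop :=
  ∃ a b c d x y : Fin (p + q), List.Pairwise (· ≠ ·) [a, b, c, d, x, y] ∧
    x ∈ extSet p q ∧ y ∈ intSet p q ∧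
    MapsCyc4 (⇑(lamPerm p q x y)) {a, b, c, d} a b c d ∧
    MapsSwap2 (⇑τ) {a, b, c, d, x, y} a b c d ∧
    MapsSwap (⇑τ) {a, b, c, d, x, y} x y

/-- The set `S_ann-nc(p,q)` of `(p,q)`-annular non-crossing permutations. -/
def AnnNC (p q : ℕ) (τ : Equiv.Perm (Fin (p + q))) : Prop :=
  AnnStandard p q τ ∧ ¬ AC1 p q τ ∧ ¬ AC2 p q τ ∧ ¬ AC3 p q τ

/-- A `(p,q)`-connecting set: meets both the external and internal points. -/
def ConnectingBlock (p q : ℕ) (B : Set (Fin (p + q))) : Prop :=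
  (B ∩ extSet p q).Nonempty ∧ (B ∩ intSet p q).Nonempty

/-- `τ` is `(p,q)`-connected: it has a `(p,q)`-connecting orbit. -/
def AnnConnected (p q : ℕ) (τ : Equiv.Perm (Fin (p + q))) : Prop :=
  ∃ A : Set (Fin (p + q)), IsOrbit τ A ∧ ConnectingBlock p q A

/-- A family of blocks has no crossing: no `a < b < c < d` with `a, c` in one block and
`b, d` in a different block. -/
def NoCrossing {n : ℕ} (ρ : Set (Set (Fin n))) : Prop :=
  ¬ ∃ (a b c d : Fin n) (B C : Set (Fin n)), B ∈ ρ ∧ C ∈ ρ ∧ B ≠ C ∧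
      a < b ∧ b < c ∧ c < d ∧ a ∈ B ∧ c ∈ B ∧ b ∈ C ∧ d ∈ C

section InducedLemmas

variable {α : Type*}

theorem ind_eq_of_first {f : α → α} {B : Set α} {b : α} {k : ℕ} (hk : 0 < k)
    (hm : f^[k] b ∈ B) (hj : ∀ j, 0 < j → j < k → f^[j] b ∉ B) :
    induced f B b = f^[k] b := by
  classical
  have h : ∃ k, 0 < k ∧ f^[k] b ∈ B := ⟨k, hk, hm⟩
  unfold induced
  rw [dif_pos h]
  congr 1
  have h1 := Nat.find_spec h
  have h2 := Nat.find_min' h ⟨hk, hm⟩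
  by_contra hne
  exact hj _ h1.1 (lt_of_le_of_ne h2 hne) h1.2

theorem ind_exists [Finite α] (f : Equiv.Perm α) {B : Set α} {b : α} (hb : b ∈ B) :
    ∃ k, 0 < k ∧ induced (⇑f) B b = (⇑f)^[k] b ∧ (⇑f)^[k] b ∈ B ∧
      ∀ j, 0 < j → j < k → (⇑f)^[j] b ∉ B := by
  classical
  have h : ∃ k, 0 < k ∧ (⇑f)^[k] b ∈ B := by
    refine ⟨orderOf f, orderOf_pos f, ?_⟩
    rw [Equiv.Perm.iterate_eq_pow, pow_orderOf_eq_one]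
    exact hb
  have h1 := Nat.find_spec h
  have h3 : ∀ j, 0 < j → j < Nat.find h → (⇑f)^[j] b ∉ B := by
    intro j hj hj' hm
    exact Nat.find_min h hj' ⟨hj, hm⟩
  exact ⟨Nat.find h, h1.1, ind_eq_of_first h1.1 h1.2 h3, h1.2, h3⟩

theorem ind_mem [Finite α] (f : Equiv.Perm α) {B : Set α} {b : α} (hb : b ∈ B) :
    induced (⇑f) B b ∈ B := by
  obtain ⟨k, _, h2, h3, _⟩ := ind_exists f hb
  rw [h2]; exact h3

theorem ind_same [Finite α] (f : Equiv.Perm α) {B : Set α} {b : α} (hb : b ∈ B) :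
    f.SameCycle b (induced (⇑f) B b) := by
  obtain ⟨k, _, h2, _, _⟩ := ind_exists f hb
  rw [h2, Equiv.Perm.iterate_eq_pow]
  exact ⟨k, by simp⟩

theorem ind_inv [Finite α] (f : Equiv.Perm α) {B T : Set α} {b : α} (hb : b ∈ B)
    (hT : ∀ t ∈ T, f t ∈ T) (hbT : b ∈ T) : induced (⇑f) B b ∈ T := by
  obtain ⟨k, _, h2, _, _⟩ := ind_exists f hb
  rw [h2]
  clear h2
  have : ∀ k, (⇑f)^[k] b ∈ T := by
    intro k
    induction k with
    | zero => exact hbT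
    | succ k ih => rw [Function.iterate_succ_apply']; exact hT _ ih
  exact this k

theorem ind_injOn [Finite α] (f : Equiv.Perm α) {B : Set α} {a b : α} (ha : a ∈ B) (hb : b ∈ B)
    (h : induced (⇑f) B a = induced (⇑f) B b) : a = b := by
  obtain ⟨k, k1, k2, k3, k4⟩ := ind_exists f ha
  obtain ⟨l, l1, l2, l3, l4⟩ := ind_exists f hb
  rw [k2, l2] at h
  rcases lt_trichotomy k l with hkl | hkl | hkl
  · exfalso
    obtain ⟨d, rfl⟩ := Nat.exists_eq_add_of_lt hkl
    have e : (⇑f)^[k] a = (⇑f)^[k] ((⇑f)^[d+1] b) := by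
      rw [← Function.iterate_add_apply, h]; rfl
    have := (f.injective.iterate k) e
    exact l4 (d+1) (by omega) (by omega) (this ▸ ha)
  · subst hkl
    exact (f.injective.iterate k) h
  · exfalso
    obtain ⟨d, rfl⟩ := Nat.exists_eq_add_of_lt hkl
    have e : (⇑f)^[l] b = (⇑f)^[l] ((⇑f)^[d+1] a) := by
      rw [← Function.iterate_add_apply, ← h]; rfl
    have := (f.injective.iterate l) e
    exact k4 (d+1) (by omega) (by omega) (this ▸ hb)

theorem ind_reach [Finite α] (f : Equiv.Perm α) {B T : Set α} (hTB : T ⊆ B)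
    (hT : ∀ t ∈ T, induced (⇑f) B t ∈ T) {a s : α} (ha : a ∈ T) (hs : s ∈ B)
    (has : f.SameCycle a s) : s ∈ T := by
  obtain ⟨n, hn⟩ := has.exists_nat_pow_eq
  rw [← Equiv.Perm.iterate_eq_pow] at hn
  induction n using Nat.strong_induction_on generalizing a with
  | _ n ih =>
    rcases Nat.eq_zero_or_pos n with h0 | h0
    · subst h0; rw [← hn]; exact ha
    · obtain ⟨k, k1, k2, k3, k4⟩ := ind_exists f (hTB ha)
      have hkn : k ≤ n := by
        by_contra hlt
        exact k4 n h0 (by omega) (hn ▸ hs)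
      refine ih (n - k) (by omega) (hT a ha) ?_ ?_
      · exact ((ind_same f (hTB ha)).symm).trans has
      · rw [k2, ← Function.iterate_add_apply, Nat.sub_add_cancel hkn, hn]

/-- `s` is compatible with `c` following `b` in the cyclic order given by `pos`. -/
def bt (pos : α → ℕ) (b c s : α) : Prop :=
  (pos b < pos c → ¬ (pos b < pos s ∧ pos s < pos c)) ∧
  (pos c ≤ pos b → pos c ≤ pos s ∧ pos s ≤ pos b)

theorem ind_bt [Finite α] (f : Equiv.Perm α) (pos : α → ℕ) {T : Set α}
    (hinj : ∀ u ∈ T, ∀ v ∈ T, pos u = pos v → u = v)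
    (hT : ∀ t ∈ T, f t ∈ T) (hbt : ∀ t ∈ T, ∀ s ∈ T, bt pos t (f t) s)
    {S : Set α} {b : α} (hb : b ∈ S) (hbT : b ∈ T) :
    ∀ s ∈ S, s ∈ T → bt pos b (induced (⇑f) S b) s := by
  obtain ⟨k, k1, k2, k3, k4⟩ := ind_exists f hb
  rw [k2]
  clear k2 k3
  suffices h : ∀ k, 0 < k → (∀ j, 0 < j → j < k → (⇑f)^[j] b ∉ S) →
      (⇑f)^[k] b ∈ T ∧ ∀ s ∈ S, s ∈ T → bt pos b ((⇑f)^[k] b) s from (h k k1 k4).2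
  clear k1 k4 k
  intro k
  induction k with
  | zero => intro h; omega
  | succ k ih =>
    intro _ hk
    rcases Nat.eq_zero_or_pos k with h0 | h0
    · subst h0
      exact ⟨hT b hbT, fun s _ hs => hbt b hbT s hs⟩
    · obtain ⟨i1, i2⟩ := ih h0 (fun j hj hjk => hk j hj (by omega))
      have hc := hk k h0 (by omega)
      rw [Function.iterate_succ_apply']
      set c := (⇑f)^[k] b
      refine ⟨hT c i1, fun s hs hsT => ?_⟩
      have A := i2 s hs hsT
      have A' := i2 b hb hbT
      have B := hbt c i1 s hsT
      have B' := hbt c i1 b hbT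
      have C : pos c ≠ pos s := fun h => hc (hinj c i1 s hsT h ▸ hs)
      have C' : pos c ≠ pos b := fun h => hc (hinj c i1 b hbT h ▸ hb)
      unfold bt at *
      omega

theorem bt_unique {pos : α → ℕ} {S : Set α} {b c c' : α} 
    (hc : c ∈ S) (hc' : c' ∈ S)
    (h : ∀ s ∈ S, bt pos b c s) (h' : ∀ s ∈ S, bt pos b c' s) (hb : b ∈ S) : pos c = pos c' := by
  have := h c' hc'
  have := h' c hc
  have := h b hb
  have := h' b hb
  unfold bt at *
  omega

theorem ind_eq_of_bt [Finite α] (f : Equiv.Perm α) (pos : α → ℕ) {T : Set α}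
    (hinj : ∀ u ∈ T, ∀ v ∈ T, pos u = pos v → u = v)
    (hT : ∀ t ∈ T, f t ∈ T) (hbt : ∀ t ∈ T, ∀ s ∈ T, bt pos t (f t) s)
    {S : Set α} (hST : S ⊆ T) {b c : α} (hb : b ∈ S) (hc : c ∈ S)
    (h : ∀ s ∈ S, bt pos b c s) : induced (⇑f) S b = c := by
  have hm := ind_mem f hb
  refine hinj _ (hST hm) _ (hST hc) (bt_unique (pos := pos) hm hc ?_ h hb)
  intro s hs
  exact ind_bt f pos hinj hT hbt hb (hST hb) s hs (hST hs)

/-- swap pattern from orbits -/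
theorem ind_swap [Finite α] (f : Equiv.Perm α) {S : Set α} {x y : α} (hx : x ∈ S) (hy : y ∈ S)
    (hne : x ≠ y) (hxy : f.SameCycle x y) (h : ∀ s ∈ S, f.SameCycle x s → s = x ∨ s = y) :
    induced (⇑f) S x = y ∧ induced (⇑f) S y = x := by
  have h1 := h _ (ind_mem f hx) (ind_same f hx)
  have h2 := h _ (ind_mem f hy) (hxy.trans (ind_same f hy))
  constructor
  · rcases h1 with h1 | h1
    · exfalso
      have := ind_reach f (B := S) (T := {x}) (by simpa using hx) (by simpa using h1)
        (Set.mem_singleton x) hy hxy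
      exact hne (Set.mem_singleton_iff.1 this).symm
    · exact h1
  · rcases h2 with h2 | h2
    · exact h2
    · exfalso
      have := ind_reach f (B := S) (T := {y}) (by simpa using hy) (by simpa using h2)
        (Set.mem_singleton y) hx hxy.symm
      exact hne (Set.mem_singleton_iff.1 this)

theorem ind_cyc3 [Finite α] (f : Equiv.Perm α) {S : Set α} {x y z : α} (hx : x ∈ S) (hy : y ∈ S)
    (hz : z ∈ S) (hxy : x ≠ y) (hxz : x ≠ z) (hyz : y ≠ z) (hfx : induced (⇑f) S x = y)
    (hc : f.SameCycle x z)
    (h : ∀ s ∈ S, f.SameCycle x s → s = x ∨ s = y ∨ s = z) :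
    induced (⇑f) S y = z ∧ induced (⇑f) S z = x := by
  have sxy : f.SameCycle x y := hfx ▸ ind_same f hx
  have h2 := h _ (ind_mem f hy) (sxy.trans (ind_same f hy))
  have h3 := h _ (ind_mem f hz) (hc.trans (ind_same f hz))
  have i1 : induced (⇑f) S y ≠ y := fun e => hxy (ind_injOn f hx hy (hfx.trans e.symm))
  have i2 : induced (⇑f) S z ≠ y := fun e => hxz (ind_injOn f hx hz (hfx.trans e.symm))
  have i3 : induced (⇑f) S y ≠ x := by
    intro e
    have := ind_reach f (B := S) (T := {x, y}) (by rintro s (rfl | rfl) <;> assumption)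
      (by rintro s (rfl | rfl) <;> simp [*]) (Set.mem_insert x _) hz hc
    rcases this with r | r
    · exact hxz r.symm
    · exact hyz (Set.mem_singleton_iff.1 r).symm
  have e1 : induced (⇑f) S y = z := by tauto
  have i4 : induced (⇑f) S z ≠ z := fun e => hyz (ind_injOn f hy hz (e1.trans e.symm))
  exact ⟨e1, by tauto⟩

end InducedLemmas
section LinAlg

/-- Functions invariant under `τ`. -/
def InvSub {α : Type*} (τ : Equiv.Perm α) : Submodule ℚ (α → ℚ) where
  carrier := {f | ∀ x, f (τ x) = f x}
  add_mem' := by intro a b ha hb x; simp [ha x, hb x]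
  zero_mem' := by intro x; rfl
  smul_mem' := by intro c f hf x; simp [hf x]

theorem mem_InvSub {α : Type*} {τ : Equiv.Perm α} {f : α → ℚ} :
    f ∈ InvSub τ ↔ ∀ x, f (τ x) = f x := Iff.rfl

theorem InvSub_same {α : Type*} [Finite α] {τ : Equiv.Perm α} {β : Type*} {f : α → β}
    (hf : ∀ x, f (τ x) = f x) {x y : α} (h : τ.SameCycle x y) : f y = f x := by
  obtain ⟨n, rfl⟩ := h.exists_nat_pow_eq
  induction n with
  | zero => rfl
  | succ n ih =>
    rw [pow_succ', Equiv.Perm.mul_apply, hf]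
    exact ih (Equiv.Perm.sameCycle_pow_right.2 (Equiv.Perm.SameCycle.refl τ x))

/-- the orbit containing `x` -/
def orbOf {α : Type*} (τ : Equiv.Perm α) (x : α) : {A : Set α | IsOrbit τ A} :=
  ⟨{b | τ.SameCycle x b}, x, rfl⟩

theorem finrank_InvSub {α : Type*} [Finite α] (τ : Equiv.Perm α) :
    Module.finrank ℚ (InvSub τ) = numOrbits τ := by
  classical
  have hfin : Finite (Set α) := inferInstance
  have : Fintype {A : Set α | IsOrbit τ A} := Fintype.ofFinite _
  let rep : {A : Set α | IsOrbit τ A} → α := fun A => A.2.choose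
  have hrep : ∀ A : {A : Set α | IsOrbit τ A}, A.1 = {b | τ.SameCycle (rep A) b} :=
    fun A => A.2.choose_spec
  have horb : ∀ A, orbOf τ (rep A) = A := fun A => Subtype.ext (hrep A).symm
  have hro : ∀ x, τ.SameCycle (rep (orbOf τ x)) x := by
    intro x
    have h := hrep (orbOf τ x)
    have hx : x ∈ (orbOf τ x).1 := Equiv.Perm.SameCycle.refl τ x
    rw [h] at hx
    exact hx
  have hor : ∀ x, orbOf τ (τ x) = orbOf τ x := by
    intro x
    apply Subtype.ext
    ext b
    simp [orbOf]
  let e : InvSub τ ≃ₗ[ℚ] ({A : Set α | IsOrbit τ A} → ℚ) :=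
    { toFun := fun f A => f.1 (rep A)
      map_add' := fun f g => rfl
      map_smul' := fun c f => rfl
      invFun := fun g => ⟨fun x => g (orbOf τ x), fun x => by simp only [hor]⟩
      left_inv := by
        intro f
        apply Subtype.ext
        funext x
        exact (InvSub_same f.2 (hro x)).symm
      right_inv := by
        intro g
        funext A
        simp only [horb] }
  rw [e.finrank_eq, Module.finrank_fintype_fun_eq_card, numOrbits, Set.ncard_eq_toFinset_card',
    Set.toFinset_card]

/-- The arc condition. -/
def ArcCond {n : ℕ} (τ : Equiv.Perm (Fin n)) : Prop :=
  ∀ m x : Fin n, ((if τ m ≤ τ x then 1 else 0) - (if m < τ x then 1 else 0) : ℚ)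
    = (if τ m ≤ x then 1 else 0) - (if m < x then 1 else 0)

theorem disc_iff {n : ℕ} (hn : 0 < n) (τ K : Equiv.Perm (Fin n))
    (h1 : ∀ x : Fin n, (x : ℕ) + 1 < n → (τ (K x) : ℕ) = x + 1)
    (h2 : ∀ x : Fin n, (x : ℕ) + 1 = n → (τ (K x) : ℕ) = 0) :
    ArcCond τ ↔ numOrbits τ + numOrbits K = n + 1 := by
  have hinf : Module.finrank ℚ ↥(InvSub τ ⊓ InvSub K) = 1 := by
    have : InvSub τ ⊓ InvSub K = Submodule.span ℚ {(fun _ => 1 : Fin n → ℚ)} := by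
      ext f
      rw [Submodule.mem_inf, Submodule.mem_span_singleton, mem_InvSub, mem_InvSub]
      constructor
      · rintro ⟨hf, hg⟩
        have hc : ∀ k : ℕ, ∀ hk : k < n, f ⟨k, hk⟩ = f ⟨0, hn⟩ := by
          intro k
          induction k with
          | zero => intro hk; rfl
          | succ k ih =>
            intro hk
            have i7 : τ (K ⟨k, by omega⟩) = ⟨k+1, hk⟩ := Fin.ext (h1 ⟨k, by omega⟩ hk)
            rw [← ih (by omega), ← hg ⟨k, by omega⟩, ← hf (K _), i7]
        refine ⟨f ⟨0, hn⟩, ?_⟩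
        funext x
        simpa using (hc x.1 x.2).symm
      · rintro ⟨a, rfl⟩
        simp
    rw [this, finrank_span_singleton]
    intro h
    have := congrFun h ⟨0, hn⟩
    simp at this
  have hsum := Submodule.finrank_sup_add_finrank_inf_eq (InvSub τ) (InvSub K)
  rw [hinf, finrank_InvSub, finrank_InvSub] at hsum
  have htop : numOrbits τ + numOrbits K = n + 1 ↔ InvSub τ ⊔ InvSub K = ⊤ := by
    constructor
    · intro h
      apply Submodule.eq_top_of_finrank_eq
      rw [Module.finrank_fintype_fun_eq_card, Fintype.card_fin]
      omega
    · intro h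
      rw [h, finrank_top, Module.finrank_fintype_fun_eq_card, Fintype.card_fin] at hsum
      omega
  rw [htop]
  have hK : ∀ x m, K x = m ↔ τ (K x) = τ m := fun x m => by simp
  constructor
  · intro hP
    rw [eq_top_iff]
    intro f _
    have hd : ∀ m : Fin n, (Pi.single m 1 : Fin n → ℚ) ∈ InvSub τ ⊔ InvSub K := by
      intro m
      rw [Submodule.mem_sup]
      let g : Fin n → ℚ := fun x => (if τ m ≤ x then 1 else 0) - (if m < x then 1 else 0)
      have hg : g ∈ InvSub τ := fun x => hP m x
      refine ⟨g, hg, Pi.single m 1 - g, ?_, by simp⟩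
      intro x
      have e1 : g (K x) = g (τ (K x)) := (hg (K x)).symm
      simp only [Pi.sub_apply, e1, Pi.single_apply, hK]
      simp only [g, Fin.ext_iff, Fin.le_def, Fin.lt_def]
      have := (τ m).2
      have := m.2
      have := x.2
      rcases Nat.lt_or_ge (x.1 + 1) n with hx | hx
      · rw [h1 x hx]
        split_ifs <;> first | omega | norm_num
      · rw [h2 x (by omega)]
        split_ifs <;> first | omega | norm_num
    have := pi_eq_sum_univ f
    rw [this]
    refine Submodule.sum_mem _ (fun i _ => Submodule.smul_mem _ _ ?_)
    convert hd i using 1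
    funext j
    simp [Pi.single_apply, eq_comm]
  · intro htop m x
    have hm : (Pi.single m 1 : Fin n → ℚ) ∈ InvSub τ ⊔ InvSub K := by rw [htop]; trivial
    rw [Submodule.mem_sup] at hm
    obtain ⟨g, hg, h, hh, hgh⟩ := hm
    rw [mem_InvSub] at hg hh
    have key : ∀ k : ℕ, ∀ hk : k < n, g ⟨k, hk⟩ = g ⟨0, hn⟩ - (if (τ m : ℕ) = 0 then 1 else 0)
        + ((if (τ m : ℕ) ≤ k then 1 else 0) - (if (m : ℕ) < k then 1 else 0)) := by
      intro k
      induction k with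
      | zero => intro hk; simp
      | succ k ih =>
        intro hk
        have i1 := ih (by omega)
        have i2 := congrFun hgh (K ⟨k, by omega⟩)
        have i3 := congrFun hgh ⟨k, by omega⟩
        have i4 := hg (K ⟨k, by omega⟩)
        have i5 := hh ⟨k, by omega⟩
        have i6 := h1 ⟨k, by omega⟩ hk
        have i7 : τ (K ⟨k, by omega⟩) = ⟨k+1, hk⟩ := Fin.ext i6
        simp only [Pi.add_apply, Pi.single_apply, hK, i7] at i2 i3
        rw [i7] at i4
        have e : g ⟨k+1, hk⟩ = g ⟨k, by omega⟩ + ((if (⟨k+1,hk⟩ : Fin n) = τ m then 1 else 0)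
            - (if (⟨k, by omega⟩ : Fin n) = m then 1 else 0)) := by
          rw [← i2, ← i3, i4, i5]; ring
        rw [e, i1]
        simp only [Fin.ext_iff]
        split_ifs <;> first | (exfalso; omega) | ring
    have a := key x.1 x.2
    have b := key (τ x).1 (τ x).2
    have c := hg x
    simp only [Fin.eta] at a b
    rw [a, b] at c
    simp only [Fin.le_def, Fin.lt_def]
    linarith

theorem numOrbits_swap {n : ℕ} (K : Equiv.Perm (Fin n)) (e l : Fin n) (hel : e ≠ l)
    (hKl : K l = e) : numOrbits (K * Equiv.swap e l) = numOrbits K + 1 := by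
  rw [← finrank_InvSub, ← finrank_InvSub]
  set K0 := K * Equiv.swap e l with hK0
  have k1 : K0 e = e := by simp [hK0, hKl]
  have k2 : K0 l = K e := by simp [hK0]
  have k3 : ∀ x, x ≠ e → x ≠ l → K0 x = K x := fun x h1 h2 => by
    simp [hK0, Equiv.swap_apply_of_ne_of_ne h1 h2]
  have k4 : ∀ x, x ≠ e → K0 x ≠ e := fun x hx h => hx (K0.injective (h.trans k1.symm))
  let d : Fin n → ℚ := Pi.single e 1
  have hsup : InvSub K0 = InvSub K ⊔ Submodule.span ℚ {d} := by
    apply le_antisymm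
    · intro f hf
      rw [mem_InvSub] at hf
      rw [Submodule.mem_sup]
      refine ⟨f - (f e - f l) • d, ?_, (f e - f l) • d,
        Submodule.smul_mem _ _ (Submodule.mem_span_singleton_self d), by simp⟩
      intro x
      by_cases hxe : x = e
      · subst hxe
        have := k4 l hel.symm
        rw [k2] at this
        have h' := hf l
        rw [k2] at h'
        simp [d, this, h']
      · by_cases hxl : x = l
        · subst hxl
          simp [d, hKl, hxe]
        · have := k4 x hxe
          have h' := hf x
          rw [k3 x hxe hxl] at this h'
          simp [d, this, hxe, h']
    · rw [sup_le_iff, Submodule.span_singleton_le_iff_mem]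
      constructor
      · intro f hf
        rw [mem_InvSub] at hf
        have hel' : f e = f l := by rw [← hf l, hKl]
        intro x
        by_cases hxe : x = e
        · subst hxe; rw [k1]
        · by_cases hxl : x = l
          · subst hxl; rw [k2, hf, hel']
          · rw [k3 x hxe hxl, hf]
      · intro x
        by_cases hxe : x = e
        · subst hxe; rw [k1]
        · simp [d, hxe, k4 x hxe]
  have hdis : InvSub K ⊓ Submodule.span ℚ {d} = ⊥ := by
    rw [eq_bot_iff]
    rintro f ⟨hf, hf2⟩
    obtain ⟨a, rfl⟩ := Submodule.mem_span_singleton.1 hf2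
    have := (mem_InvSub.1 hf) l
    rw [hKl] at this
    have ha : a = 0 := by simpa [d, hel.symm] using this
    simp [ha]
  have hd : d ≠ 0 := by
    intro h
    have := congrFun h e
    simp [d] at this
  have h := Submodule.finrank_sup_add_finrank_inf_eq (InvSub K) (Submodule.span ℚ {d})
  rw [hdis, finrank_bot, finrank_span_singleton hd, ← hsup] at h
  omega

end LinAlg
section GammaLambda

theorem list_inj {α : Type*} (pos : α → ℕ) {l : List α}
    (hl : l.Pairwise (fun a b => pos a < pos b)) {u v : α} (hu : u ∈ l) (hv : v ∈ l)
    (h : pos u = pos v) : u = v := by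
  obtain ⟨i, hi, rfl⟩ := List.mem_iff_getElem.1 hu
  obtain ⟨j, hj, rfl⟩ := List.mem_iff_getElem.1 hv
  rw [List.pairwise_iff_getElem] at hl
  rcases lt_trichotomy i j with hij | hij | hij
  · have := hl i j hi hj hij; omega
  · subst hij; rfl
  · have := hl j i hj hi hij; omega

theorem list_bt {α : Type*} [DecidableEq α] (pos : α → ℕ) {l : List α}
    (hl : l.Pairwise (fun a b => pos a < pos b)) {t s : α} (ht : t ∈ l) (hs : s ∈ l) :
    bt pos t (l.formPerm t) s := by
  have hnd : l.Nodup := hl.imp (fun {a b} h e => by subst e; omega)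
  obtain ⟨i, hi, rfl⟩ := List.mem_iff_getElem.1 ht
  obtain ⟨j, hj, rfl⟩ := List.mem_iff_getElem.1 hs
  rw [List.formPerm_apply_getElem _ hnd]
  rw [List.pairwise_iff_getElem] at hl
  have hmono : ∀ a b (ha : a < l.length) (hb : b < l.length), a ≤ b → pos l[a] ≤ pos l[b] := by
    intro a b ha hb hab
    rcases Nat.eq_or_lt_of_le hab with h | h
    · subst h; exact le_rfl
    · exact (hl a b ha hb h).le
  rcases Nat.lt_or_ge (i+1) l.length with h | h
  · simp only [Nat.mod_eq_of_lt h]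
    have := hl i (i+1) hi h (by omega)
    refine ⟨fun _ => ?_, fun h' => by omega⟩
    rcases Nat.lt_or_ge i j with hij | hij
    · have := hmono (i+1) j h hj hij; omega
    · have := hmono j i hj hi hij; omega
  · have e : i + 1 = l.length := by omega
    simp only [e, Nat.mod_self]
    have a1 := hmono 0 i (by omega) hi (by omega)
    have a2 := hmono 0 j (by omega) hj (by omega)
    have a3 := hmono j i hj hi (by omega)
    exact ⟨fun h' => by omega, fun _ => ⟨a2, a3⟩⟩

variable {p q : ℕ}

theorem mem_extList {v : Fin (p + q)} : v ∈ (List.finRange (p + q)).take p ↔ (v : ℕ) < p := by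
  rw [List.mem_take_iff_getElem]
  simp only [List.getElem_finRange, List.length_finRange, Fin.ext_iff]
  constructor
  · rintro ⟨i, hi, h⟩
    simp at h
    omega
  · intro h
    exact ⟨v, by omega, by simp⟩

theorem mem_intList {v : Fin (p + q)} : v ∈ (List.finRange (p + q)).drop p ↔ p ≤ (v : ℕ) := by
  rw [List.mem_drop_iff_getElem]
  simp only [List.getElem_finRange, List.length_finRange, Fin.ext_iff]
  constructor
  · rintro ⟨i, hi, h⟩
    simp at h
    omega
  · intro h
    exact ⟨v - p, by omega, by simp; omega⟩

theorem pw_fin : (List.finRange (p + q)).Pairwise (fun a b : Fin (p + q) => (a : ℕ) < (b : ℕ)) := by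
  rw [List.pairwise_iff_getElem]
  intro i j hi hj hij
  simpa using hij

theorem pw_ext : ((List.finRange (p + q)).take p).Pairwise (fun a b : Fin (p + q) => (a : ℕ) < (b : ℕ)) :=
  pw_fin.sublist (List.take_sublist _ _)

theorem pw_int : ((List.finRange (p + q)).drop p).Pairwise (fun a b : Fin (p + q) => (a : ℕ) < (b : ℕ)) :=
  pw_fin.sublist (List.drop_sublist _ _)

theorem ext_bt {t s : Fin (p + q)} (ht : (t : ℕ) < p) (hs : (s : ℕ) < p) :
    bt (fun v : Fin (p + q) => (v : ℕ)) t (gammaExt p q t) s :=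
  list_bt _ pw_ext (mem_extList.2 ht) (mem_extList.2 hs)

theorem int_bt {t s : Fin (p + q)} (ht : p ≤ (t : ℕ)) (hs : p ≤ (s : ℕ)) :
    bt (fun v : Fin (p + q) => (v : ℕ)) t (gammaInt p q t) s :=
  list_bt _ pw_int (mem_intList.2 ht) (mem_intList.2 hs)

theorem ext_lt {t : Fin (p + q)} (ht : (t : ℕ) < p) : (gammaExt p q t : ℕ) < p :=
  mem_extList.1 (List.formPerm_apply_mem_of_mem (mem_extList.2 ht))

theorem int_ge {t : Fin (p + q)} (ht : p ≤ (t : ℕ)) : p ≤ (gammaInt p q t : ℕ) :=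
  mem_intList.1 (List.formPerm_apply_mem_of_mem (mem_intList.2 ht))

theorem ext_fix {t : Fin (p + q)} (ht : p ≤ (t : ℕ)) : gammaExt p q t = t :=
  List.formPerm_apply_of_notMem (fun h => by have := mem_extList.1 h; omega)

theorem int_fix {t : Fin (p + q)} (ht : (t : ℕ) < p) : gammaInt p q t = t :=
  List.formPerm_apply_of_notMem (fun h => by have := mem_intList.1 h; omega)

theorem ann_ext {t : Fin (p + q)} (ht : (t : ℕ) < p) : gammaAnn p q t = gammaExt p q t := by
  rw [gammaAnn, Equiv.Perm.mul_apply, int_fix ht]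

theorem ann_int {t : Fin (p + q)} (ht : p ≤ (t : ℕ)) : gammaAnn p q t = gammaInt p q t := by
  rw [gammaAnn, Equiv.Perm.mul_apply, ext_fix (int_ge ht)]

theorem ext_val {t : Fin (p + q)} (ht : (t : ℕ) < p) :
    (gammaExt p q t : ℕ) = if (t : ℕ) + 1 < p then (t : ℕ) + 1 else 0 := by
  have h := ext_lt ht
  split_ifs with h1
  · have h2 := ext_bt ht (s := ⟨t + 1, by omega⟩) h1
    have h3 := ext_bt ht (s := t) ht
    have h4 := ext_bt ht (s := ⟨0, by omega⟩) (show 0 < p by omega)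
    unfold bt at *
    simp only at *
    omega
  · have h4 := ext_bt ht (s := ⟨0, by omega⟩) (show 0 < p by omega)
    unfold bt at *
    simp only at *
    omega

theorem int_val {t : Fin (p + q)} (ht : p ≤ (t : ℕ)) :
    (gammaInt p q t : ℕ) = if (t : ℕ) + 1 < p + q then (t : ℕ) + 1 else p := by
  have h := int_ge ht
  have ht' := t.2
  have ht'' := (gammaInt p q t).2
  split_ifs with h1
  · have h2 := int_bt ht (s := ⟨t + 1, by omega⟩) (show p ≤ (t : ℕ) + 1 by omega)
    have h3 := int_bt ht (s := t) ht
    unfold bt at *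
    simp only at *
    omega
  · have h4 := int_bt ht (s := ⟨p, by omega⟩) (show p ≤ p by omega)
    unfold bt at *
    simp only at *
    omega

theorem ext_pow_val {x : Fin (p + q)} (hx : (x : ℕ) < p) (k : ℕ) (hk : k < p) :
    ((gammaExt p q ^ k) x : ℕ) = if (x : ℕ) + k < p then (x : ℕ) + k else x + k - p := by
  induction k with
  | zero => simp [hx]
  | succ k ih =>
    have h := ih (by omega)
    rw [pow_succ', Equiv.Perm.mul_apply, ext_val (by rw [h]; split_ifs <;> omega), h]
    split_ifs <;> omega

theorem int_pow_val {y : Fin (p + q)} (hy : p ≤ (y : ℕ)) (k : ℕ) (hk : k < q) :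
    ((gammaInt p q ^ k) y : ℕ) = if (y : ℕ) + k < p + q then (y : ℕ) + k else y + k - q := by
  have := y.2
  induction k with
  | zero => simp
  | succ k ih =>
    have h := ih (by omega)
    rw [pow_succ', Equiv.Perm.mul_apply, int_val (by rw [h]; split_ifs <;> omega), h]
    split_ifs <;> omega

/-- Position in the cycle `λ_{x,y}`. -/
def lamPos (p q : ℕ) (x y v : Fin (p + q)) : ℕ :=
  if (v : ℕ) < p then (if (x : ℕ) < v then (v : ℕ) - x else v + p - x)
  else (if (y : ℕ) < v then p + v - y else p + q + v - y)

theorem lamPos_ext {x y : Fin (p + q)} (hx : (x : ℕ) < p) (k : ℕ) (hk : k < p - 1) :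
    lamPos p q x y ((gammaExt p q ^ (k + 1)) x) = k + 1 := by
  have := ext_pow_val hx (k + 1) (by omega)
  unfold lamPos
  rw [this]
  split_ifs <;> omega

theorem lamPos_int {x y : Fin (p + q)} (hy : p ≤ (y : ℕ)) (k : ℕ) (hk : k < q - 1) :
    lamPos p q x y ((gammaInt p q ^ (k + 1)) y) = p + k + 1 := by
  have := int_pow_val hy (k + 1) (by omega)
  have := y.2
  unfold lamPos
  split_ifs <;> split_ifs at * <;> omega

/-- The list underlying `λ_{x,y}`. -/
def lamList (p q : ℕ) (x y : Fin (p + q)) : List (Fin (p + q)) :=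
  (((List.range (p - 1)).map fun k => (gammaExt p q ^ (k + 1)) x) ++
    ((List.range (q - 1)).map fun k => (gammaInt p q ^ (k + 1)) y))

theorem lam_pw {x y : Fin (p + q)} (hx : (x : ℕ) < p) (hy : p ≤ (y : ℕ)) :
    (lamList p q x y).Pairwise
      (fun a b => lamPos p q x y a < lamPos p q x y b) := by
  rw [lamList, List.pairwise_append]
  refine ⟨?_, ?_, ?_⟩
  · rw [List.pairwise_map]
    refine List.pairwise_lt_range.imp_of_mem ?_
    intro a b ha hb hab
    rw [lamPos_ext hx a (by simpa using ha), lamPos_ext hx b (by simpa using hb)]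
    omega
  · rw [List.pairwise_map]
    refine List.pairwise_lt_range.imp_of_mem ?_
    intro a b ha hb hab
    rw [lamPos_int hy a (by simpa using ha), lamPos_int hy b (by simpa using hb)]
    omega
  · intro a ha b hb
    simp only [List.mem_map, List.mem_range] at ha hb
    obtain ⟨k, hk, rfl⟩ := ha
    obtain ⟨j, hj, rfl⟩ := hb
    rw [lamPos_ext hx k hk, lamPos_int hy j hj]
    omega

theorem lam_mem {x y v : Fin (p + q)} (hx : (x : ℕ) < p) (hy : p ≤ (y : ℕ)) (hvx : v ≠ x)
    (hvy : v ≠ y) :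
    v ∈ (lamList p q x y) := by
  have hvx' : (v : ℕ) ≠ x := fun h => hvx (Fin.ext h)
  have hvy' : (v : ℕ) ≠ y := fun h => hvy (Fin.ext h)
  have := v.2
  have := y.2
  rw [lamList, List.mem_append, List.mem_map, List.mem_map]
  by_cases hv : (v : ℕ) < p
  · left
    rcases Nat.lt_or_ge x v with h | h
    · refine ⟨v - x - 1, by rw [List.mem_range]; omega, Fin.ext ?_⟩
      rw [ext_pow_val hx _ (by omega)]
      split_ifs <;> omega
    · refine ⟨v + p - x - 1, by rw [List.mem_range]; omega, Fin.ext ?_⟩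
      rw [ext_pow_val hx _ (by omega)]
      split_ifs <;> omega
  · right
    rcases Nat.lt_or_ge y v with h | h
    · refine ⟨v - y - 1, by rw [List.mem_range]; omega, Fin.ext ?_⟩
      rw [int_pow_val hy _ (by omega)]
      split_ifs <;> omega
    · refine ⟨v + q - y - 1, by rw [List.mem_range]; omega, Fin.ext ?_⟩
      rw [int_pow_val hy _ (by omega)]
      split_ifs <;> omega

/-- If the induced permutation of `λ_{x,y}` on `S` sends `b` to `c` then `c` is next. -/
theorem lam_ind_bt {x y : Fin (p + q)} (hx : (x : ℕ) < p) (hy : p ≤ (y : ℕ))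
    {S : Set (Fin (p + q))} (hSx : x ∉ S) (hSy : y ∉ S) {b : Fin (p + q)} (hb : b ∈ S) :
    ∀ s ∈ S, bt (lamPos p q x y) b (induced (⇑(lamPerm p q x y)) S b) s := by
  have hm : ∀ s ∈ S, s ∈ lamList p q x y := fun s hs => lam_mem hx hy (fun h => hSx (h ▸ hs)) (fun h => hSy (h ▸ hs))
  intro s hs
  exact ind_bt (lamPerm p q x y) (lamPos p q x y) (T := {v | v ∈ lamList p q x y})
    (fun u hu v hv h => list_inj _ (lam_pw hx hy) hu hv h)
    (fun t ht => List.formPerm_apply_mem_of_mem (l := lamList p q x y) ht)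
    (fun t ht s hs => list_bt _ (lam_pw hx hy) ht hs) hb (hm b hb) s hs (hm s hs)

theorem lam_ind_eq {x y : Fin (p + q)} (hx : (x : ℕ) < p) (hy : p ≤ (y : ℕ))
    {S : Set (Fin (p + q))} (hSx : x ∉ S) (hSy : y ∉ S) {b c : Fin (p + q)} (hb : b ∈ S)
    (hc : c ∈ S) (h : ∀ s ∈ S, bt (lamPos p q x y) b c s) :
    induced (⇑(lamPerm p q x y)) S b = c := by
  have hm : ∀ s ∈ S, s ∈ lamList p q x y := fun s hs => lam_mem hx hy (fun h => hSx (h ▸ hs)) (fun h => hSy (h ▸ hs))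
  exact ind_eq_of_bt (lamPerm p q x y) (lamPos p q x y) (T := {v | v ∈ lamList p q x y})
    (fun u hu v hv h => list_inj _ (lam_pw hx hy) hu hv h)
    (fun t ht => List.formPerm_apply_mem_of_mem (l := lamList p q x y) ht)
    (fun t ht s hs => list_bt _ (lam_pw hx hy) ht hs) hm hb hc h

/-- The natural position. -/
abbrev npos (n : ℕ) : Fin n → ℕ := fun v => (v : ℕ)

theorem npos_inj {n : ℕ} {T : Set (Fin n)} : ∀ u ∈ T, ∀ v ∈ T, npos n u = npos n v → u = v :=
  fun _ _ _ _ h => Fin.ext h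

theorem ann_ext_bt {S : Set (Fin (p + q))} {b : Fin (p + q)} (hb : b ∈ S) (hbp : (b : ℕ) < p) :
    ((induced (⇑(gammaAnn p q)) S b : Fin (p + q)) : ℕ) < p ∧
    ∀ s ∈ S, (s : ℕ) < p → bt (npos (p + q)) b (induced (⇑(gammaAnn p q)) S b) s := by
  have hT : ∀ t ∈ extSet p q, gammaAnn p q t ∈ extSet p q := fun t ht => by
    rw [ann_ext ht]; exact ext_lt ht
  refine ⟨ind_inv (gammaAnn p q) hb hT hbp, ?_⟩
  exact ind_bt (gammaAnn p q) (npos (p + q)) (T := extSet p q) npos_inj hT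
    (fun t ht s hs => by rw [ann_ext ht]; exact ext_bt ht hs) hb hbp

theorem ann_int_bt {S : Set (Fin (p + q))} {b : Fin (p + q)} (hb : b ∈ S) (hbp : p ≤ (b : ℕ)) :
    p ≤ ((induced (⇑(gammaAnn p q)) S b : Fin (p + q)) : ℕ) ∧
    ∀ s ∈ S, p ≤ (s : ℕ) → bt (npos (p + q)) b (induced (⇑(gammaAnn p q)) S b) s := by
  have hT : ∀ t ∈ intSet p q, gammaAnn p q t ∈ intSet p q := fun t ht => by
    rw [ann_int ht]; exact int_ge ht
  refine ⟨ind_inv (gammaAnn p q) hb hT hbp, ?_⟩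
  exact ind_bt (gammaAnn p q) (npos (p + q)) (T := intSet p q) npos_inj hT
    (fun t ht s hs => by rw [ann_int ht]; exact int_bt ht hs) hb hbp

theorem ann_ind_eq {S : Set (Fin (p + q))}
    (hS : (∀ s ∈ S, (s : ℕ) < p) ∨ (∀ s ∈ S, p ≤ (s : ℕ))) {b c : Fin (p + q)} (hb : b ∈ S)
    (hc : c ∈ S) (h : ∀ s ∈ S, bt (npos (p + q)) b c s) :
    induced (⇑(gammaAnn p q)) S b = c := by
  have hm := ind_mem (gammaAnn p q) hb
  refine Fin.ext (bt_unique (pos := npos (p + q)) hm hc ?_ h hb)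
  intro s hs
  rcases hS with hS | hS
  · exact (ann_ext_bt hb (hS b hb)).2 s hs (hS s hs)
  · exact (ann_int_bt hb (hS b hb)).2 s hs (hS s hs)

/-- A crossing within one circle gives (AC-1). -/
theorem ac1_of {τ : Equiv.Perm (Fin (p + q))} {a b c d : Fin (p + q)} (hab : a < b) (hbc : b < c)
    (hcd : c < d) (h : (d : ℕ) < p ∨ p ≤ (a : ℕ)) (hac : τ.SameCycle a c)
    (hbd : τ.SameCycle b d) (hn : ¬ τ.SameCycle a b) : AC1 p q τ := by
  simp only [Fin.lt_def] at hab hbc hcd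
  have hS : (∀ s ∈ ({a, b, c, d} : Set (Fin (p + q))), (s : ℕ) < p) ∨
      (∀ s ∈ ({a, b, c, d} : Set (Fin (p + q))), p ≤ (s : ℕ)) := by
    rcases h with h | h
    · left; rintro s (rfl | rfl | rfl | rfl) <;> omega
    · right; rintro s (rfl | rfl | rfl | rfl) <;> omega
  have hba : ¬ τ.SameCycle b a := fun h => hn h.symm
  refine ⟨a, b, c, d, ?_, ⟨?_, ?_, ?_, ?_⟩, ?_⟩
  · have n1 : a ≠ b := fun e => by subst e; omega
    have n2 : a ≠ c := fun e => by subst e; omega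
    have n3 : a ≠ d := fun e => by subst e; omega
    have n4 : b ≠ c := fun e => by subst e; omega
    have n5 : b ≠ d := fun e => by subst e; omega
    have n6 : c ≠ d := fun e => by subst e; omega
    simp [n1, n2, n3, n4, n5, n6]
  all_goals try
    refine ann_ind_eq hS (by simp) (by simp) ?_
    rintro s (rfl | rfl | rfl | rfl) <;> (unfold bt npos; omega)
  have A := ind_swap τ (S := {a, b, c, d}) (x := a) (y := c) (by simp) (by simp)
    (fun e => by subst e; omega) hac (by
      rintro s (rfl | rfl | rfl | rfl) hs
      · exact Or.inl rfl
      · exact absurd hs hn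
      · exact Or.inr rfl
      · exact absurd (hs.trans hbd.symm) hn)
  have B := ind_swap τ (S := {a, b, c, d}) (x := b) (y := d) (by simp) (by simp)
    (fun e => by subst e; omega) hbd (by
      rintro s (rfl | rfl | rfl | rfl) hs
      · exact absurd hs hba
      · exact Or.inl rfl
      · exact absurd (hs.trans hac.symm) hba
      · exact Or.inr rfl)
  exact ⟨A.1, A.2, B.1, B.2⟩

/-- Criterion for (AC-2). -/
theorem ac2_of {τ : Equiv.Perm (Fin (p + q))} {a b c x y : Fin (p + q)} (hx : (x : ℕ) < p)
    (hy : p ≤ (y : ℕ)) (hab : a ≠ b) (hbc : b ≠ c) (hac : a ≠ c)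
    (hL1 : lamPos p q x y a < lamPos p q x y b) (hL2 : lamPos p q x y b < lamPos p q x y c)
    (hxy : τ.SameCycle x y) (sab : τ.SameCycle a b) (sac : τ.SameCycle a c)
    (hn : ¬ τ.SameCycle x a)
    (h : τ a = c ∨ τ c = b ∨ τ b = a) : AC2 p q τ := by
  have hna : ¬ τ.SameCycle a x := fun h => hn h.symm
  have xa : x ≠ a := fun e => hn (e ▸ Equiv.Perm.SameCycle.refl _ _)
  have xb : x ≠ b := fun e => hna (e ▸ sab)
  have xc : x ≠ c := fun e => hna (e ▸ sac)
  have ya : y ≠ a := fun e => hn (e ▸ hxy)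
  have yb : y ≠ b := fun e => hn (hxy.trans (e ▸ sab.symm))
  have yc : y ≠ c := fun e => hn (hxy.trans (e ▸ sac.symm))
  have hxy' : x ≠ y := fun e => by subst e; omega
  have hxS : x ∉ ({a, b, c} : Set (Fin (p + q))) := by simp [xa, xb, xc]
  have hyS : y ∉ ({a, b, c} : Set (Fin (p + q))) := by simp [ya, yb, yc]
  have hone : ∀ u v : Fin (p + q), τ u = v → v ∈ ({a, b, c, x, y} : Set (Fin (p + q))) →
      induced (⇑τ) {a, b, c, x, y} u = v := by
    intro u v e hv
    subst e
    exact ind_eq_of_first (k := 1) (by omega) hv (by omega)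
  have hcl : ∀ s ∈ ({a, b, c, x, y} : Set (Fin (p + q))), τ.SameCycle a s →
      s = a ∨ s = b ∨ s = c := by
    rintro s (rfl | rfl | rfl | rfl | rfl) hs
    · simp
    · simp
    · simp
    · exact absurd hs hna
    · exact absurd (hs.trans hxy.symm) hna
  refine ⟨a, b, c, x, y, ?_, hx, hy, ⟨?_, ?_, ?_⟩, ?_, ?_⟩
  · simp [hab, hbc, hac, xa.symm, xb.symm, xc.symm, ya.symm, yb.symm, yc.symm, hxy']
  iterate 3
    · refine lam_ind_eq hx hy hxS hyS (by simp) (by simp) ?_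
      rintro s (rfl | rfl | rfl) <;> (unfold bt; omega)
  · rcases h with h | h | h
    · have e := hone _ _ h (by simp)
      have := ind_cyc3 τ (S := {a, b, c, x, y}) (by simp) (by simp) (by simp) hac hab hbc.symm
        e sab (fun s hs hs' => by have := hcl s hs hs'; tauto)
      exact ⟨e, this.1, this.2⟩
    · have e := hone _ _ h (by simp)
      have := ind_cyc3 τ (S := {a, b, c, x, y}) (by simp) (by simp) (by simp) hbc.symm hac.symm
        hab.symm e sac.symm (fun s hs hs' => by have := hcl s hs (sac.trans hs'); tauto)
      exact ⟨this.2, e, this.1⟩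
    · have e := hone _ _ h (by simp)
      have := ind_cyc3 τ (S := {a, b, c, x, y}) (by simp) (by simp) (by simp) hab.symm hbc
        hac e (sab.symm.trans sac) (fun s hs hs' => by have := hcl s hs (sab.trans hs'); tauto)
      exact ⟨this.1, this.2, e⟩
  · refine ind_swap τ (by simp) (by simp) hxy' hxy ?_
    rintro s (rfl | rfl | rfl | rfl | rfl) hs
    · exact absurd hs hn
    · exact absurd (hs.trans sab.symm) hn
    · exact absurd (hs.trans sac.symm) hn
    · simp
    · simp

/-- Criterion for (AC-3). -/
theorem ac3_of {τ : Equiv.Perm (Fin (p + q))} {a b c d x y : Fin (p + q)} (hx : (x : ℕ) < p)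
    (hy : p ≤ (y : ℕ))
    (hL1 : lamPos p q x y a < lamPos p q x y b) (hL2 : lamPos p q x y b < lamPos p q x y c)
    (hL3 : lamPos p q x y c < lamPos p q x y d)
    (hxy : τ.SameCycle x y) (sac : τ.SameCycle a c) (sbd : τ.SameCycle b d)
    (hxa : ¬ τ.SameCycle x a) (hxb : ¬ τ.SameCycle x b) (hab : ¬ τ.SameCycle a b) :
    AC3 p q τ := by
  have hax : ¬ τ.SameCycle a x := fun h => hxa h.symm
  have hbx : ¬ τ.SameCycle b x := fun h => hxb h.symm
  have hba : ¬ τ.SameCycle b a := fun h => hab h.symm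
  have nab : a ≠ b := fun e => by subst e; omega
  have nac : a ≠ c := fun e => by subst e; omega
  have nad : a ≠ d := fun e => by subst e; omega
  have nbc : b ≠ c := fun e => by subst e; omega
  have nbd : b ≠ d := fun e => by subst e; omega
  have ncd : c ≠ d := fun e => by subst e; omega
  have xa : x ≠ a := fun e => hxa (e ▸ Equiv.Perm.SameCycle.refl _ _)
  have xb : x ≠ b := fun e => hxb (e ▸ Equiv.Perm.SameCycle.refl _ _)
  have xc : x ≠ c := fun e => hax (e ▸ sac)
  have xd : x ≠ d := fun e => hbx (e ▸ sbd)
  have ya : y ≠ a := fun e => hxa (e ▸ hxy)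
  have yb : y ≠ b := fun e => hxb (e ▸ hxy)
  have yc : y ≠ c := fun e => hxa (hxy.trans (e ▸ sac.symm))
  have yd : y ≠ d := fun e => hxb (hxy.trans (e ▸ sbd.symm))
  have hxy' : x ≠ y := fun e => by subst e; omega
  have hxS : x ∉ ({a, b, c, d} : Set (Fin (p + q))) := by simp [xa, xb, xc, xd]
  have hyS : y ∉ ({a, b, c, d} : Set (Fin (p + q))) := by simp [ya, yb, yc, yd]
  refine ⟨a, b, c, d, x, y, ?_, hx, hy, ⟨?_, ?_, ?_, ?_⟩, ?_, ?_⟩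
  · simp [nab, nac, nad, nbc, nbd, ncd, xa.symm, xb.symm, xc.symm, xd.symm, ya.symm, yb.symm,
      yc.symm, yd.symm, hxy']
  iterate 4
    · refine lam_ind_eq hx hy hxS hyS (by simp) (by simp) ?_
      rintro s (rfl | rfl | rfl | rfl) <;> (unfold bt; omega)
  · have A := ind_swap τ (S := {a, b, c, d, x, y}) (x := a) (y := c) (by simp) (by simp)
      nac sac (by
        rintro s (rfl | rfl | rfl | rfl | rfl | rfl) hs
        · simp
        · exact absurd hs hab
        · simp
        · exact absurd (hs.trans sbd.symm) hab
        · exact absurd hs hax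
        · exact absurd (hs.trans hxy.symm) hax)
    have B := ind_swap τ (S := {a, b, c, d, x, y}) (x := b) (y := d) (by simp) (by simp)
      nbd sbd (by
        rintro s (rfl | rfl | rfl | rfl | rfl | rfl) hs
        · exact absurd hs hba
        · simp
        · exact absurd (hs.trans sac.symm) hba
        · simp
        · exact absurd hs hbx
        · exact absurd (hs.trans hxy.symm) hbx)
    exact ⟨A.1, A.2, B.1, B.2⟩
  · refine ind_swap τ (by simp) (by simp) hxy' hxy ?_
    rintro s (rfl | rfl | rfl | rfl | rfl | rfl) hs
    · exact absurd hs hxa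
    · exact absurd hs hxb
    · exact absurd (hs.trans sac.symm) hxa
    · exact absurd (hs.trans sbd.symm) hxb
    · simp
    · simp

end GammaLambda
section Final

def StdCond {n : ℕ} (τ : Equiv.Perm (Fin n)) : Prop :=
  ∀ m x : Fin n, τ.SameCycle m x → bt (npos n) m (τ m) x

def NCr {n : ℕ} (τ : Equiv.Perm (Fin n)) : Prop :=
  ∀ a b c d : Fin n, a < b → b < c → c < d → τ.SameCycle a c → τ.SameCycle b d →
    τ.SameCycle a b

/-- Noncrossing in the form of a cyclic statement on two pairs. -/
def crs (a b c d : ℕ) : Prop :=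
  (a < b ∧ b < c ∧ c < d) ∨ (b < c ∧ c < d ∧ d < a) ∨ (c < d ∧ d < a ∧ a < b) ∨
    (d < a ∧ a < b ∧ b < c)

theorem ncr_crs {n : ℕ} {τ : Equiv.Perm (Fin n)} (hnc : NCr τ) {a b c d : Fin n}
    (hac : τ.SameCycle a c) (hbd : τ.SameCycle b d) (hn : ¬ τ.SameCycle a b) :
    ¬ crs a b c d := by
  rintro (⟨h1, h2, h3⟩ | ⟨h1, h2, h3⟩ | ⟨h1, h2, h3⟩ | ⟨h1, h2, h3⟩)
  · exact hn (hnc a b c d h1 h2 h3 hac hbd)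
  · exact hn (hac.trans (hnc b c d a h1 h2 h3 hbd hac.symm).symm)
  · exact hn (hac.trans ((hnc c d a b h1 h2 h3 hac.symm hbd.symm).trans hbd.symm))
  · exact hn ((hnc d a b c h1 h2 h3 hbd.symm hac).symm.trans hbd.symm)

theorem arc_nat {M T X Y : ℕ} (f1 : M ≠ X) (f2 : M ≠ Y) (f3 : T ≠ X) (f4 : T ≠ Y)
    (c1 : ¬ crs M X T Y) (c2 : ¬ crs M Y T X) :
    ((if T ≤ Y then 1 else 0) - (if M < Y then 1 else 0) : ℚ)
          = (if T ≤ X then 1 else 0) - (if M < X then 1 else 0) := by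
  unfold crs at c1 c2
  rcases Nat.lt_or_gt_of_ne f1 with g1 | g1 <;> rcases Nat.lt_or_gt_of_ne f2 with g2 | g2 <;>
    rcases Nat.lt_or_gt_of_ne f3 with g3 | g3 <;> rcases Nat.lt_or_gt_of_ne f4 with g4 | g4 <;>
    simp only [g1, g2, g3, g4, g1.le, g2.le, g3.le, g4.le, not_le.2 g1, not_le.2 g2, not_le.2 g3,
      not_le.2 g4, not_lt.2 g1.le, not_lt.2 g2.le, if_true, if_false, true_and, and_true,
      not_lt.2 g3.le, not_lt.2 g4.le, false_and, and_false, false_or, or_false] <;>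
    first | (norm_num; done) | (exfalso; omega)

theorem bt4_crs {α : Type*} {pos : α → ℕ} {a b c d : α} (v1 : pos a ≠ pos b) (v2 : pos a ≠ pos c)
    (v3 : pos a ≠ pos d) (v4 : pos b ≠ pos c) (v5 : pos b ≠ pos d) (v6 : pos c ≠ pos d)
    (A1 : bt pos a b c) (A2 : bt pos a b d) (A3 : bt pos b c d) (A4 : bt pos b c a)
    (A5 : bt pos c d a) (A6 : bt pos c d b) : crs (pos a) (pos b) (pos c) (pos d) := by
  unfold bt at A1 A2 A3 A4 A5 A6
  unfold crs
  generalize pos a = A at *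
  generalize pos b = B at *
  generalize pos c = C at *
  generalize pos d = D at *
  rcases Nat.lt_or_gt_of_ne v1 with g1 | g1 <;> rcases Nat.lt_or_gt_of_ne v4 with g2 | g2 <;>
    rcases Nat.lt_or_gt_of_ne v6 with g3 | g3 <;> rcases Nat.lt_or_gt_of_ne v3 with g4 | g4 <;>
    omega

theorem bt3_false {A B C A' B' C' : ℕ} (hab : A < B ↔ A' < B') (hbc : B < C ↔ B' < C')
    (hac : A < C ↔ A' < C') (v1 : A ≠ B) (v2 : A ≠ C) (v3 : B ≠ C)
    (w1 : A' ≠ B') (w2 : A' ≠ C') (w3 : B' ≠ C')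
    (L : (A < B ∧ B < C) ∨ (B < C ∧ C < A) ∨ (C < A ∧ A < B))
    (L' : (A' < C' ∧ C' < B') ∨ (C' < B' ∧ B' < A') ∨ (B' < A' ∧ A' < C')) : False := by
  omega

theorem bt3_cyc {α : Type*} {pos : α → ℕ} {a b c : α} (v1 : pos a ≠ pos b) (v2 : pos a ≠ pos c)
    (v3 : pos b ≠ pos c) (A1 : bt pos a b c) (A2 : bt pos b c a) :
    (pos a < pos b ∧ pos b < pos c) ∨ (pos b < pos c ∧ pos c < pos a) ∨
      (pos c < pos a ∧ pos a < pos b) := by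
  unfold bt at A1 A2
  omega

theorem side_iff {x y u v : ℕ} (hxy : x < y) (n1 : u ≠ x) (n2 : u ≠ y) (n3 : v ≠ x) (n4 : v ≠ y)
    (c1 : ¬ crs x u y v) (c2 : ¬ crs x v y u) : (x < u ∧ u < y) ↔ (x < v ∧ v < y) := by
  unfold crs at c1 c2
  omega

theorem lamPos_mono {p q : ℕ} {x y u v : Fin (p + q)} (hx : (x : ℕ) < p) (hy : p ≤ (y : ℕ))
    (n1 : (u : ℕ) ≠ x) (n2 : (u : ℕ) ≠ y) (n3 : (v : ℕ) ≠ x) (n4 : (v : ℕ) ≠ y)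
    (h : ((x : ℕ) < u ∧ (u : ℕ) < y) ↔ ((x : ℕ) < v ∧ (v : ℕ) < y)) :
    lamPos p q x y u < lamPos p q x y v ↔ (u : ℕ) < v := by
  have := u.2
  have := v.2
  have := y.2
  unfold lamPos
  split_ifs <;> omega

theorem lamPos_in {p q : ℕ} {x y v : Fin (p + q)} (hx : (x : ℕ) < p) (hy : p ≤ (y : ℕ))
    (h : (x : ℕ) < v ∧ (v : ℕ) < y) :
    lamPos p q x y v < p - x ∨ p + p + q - y ≤ lamPos p q x y v := by
  have := y.2
  unfold lamPos
  split_ifs <;> omega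

theorem lamPos_out {p q : ℕ} {x y v : Fin (p + q)} (hx : (x : ℕ) < p) (hy : p ≤ (y : ℕ))
    (n1 : (v : ℕ) ≠ x) (n2 : (v : ℕ) ≠ y) (h : ¬ ((x : ℕ) < v ∧ (v : ℕ) < y)) :
    p - x ≤ lamPos p q x y v ∧ lamPos p q x y v < p + p + q - y := by
  have := y.2
  have := v.2
  unfold lamPos
  split_ifs <;> omega

theorem lamPos_ne {p q : ℕ} {x y u v : Fin (p + q)} (hx : (x : ℕ) < p) (hy : p ≤ (y : ℕ))
    (n1 : (u : ℕ) ≠ x) (n2 : (u : ℕ) ≠ y) (n3 : (v : ℕ) ≠ x) (n4 : (v : ℕ) ≠ y)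
    (h : u ≠ v) : lamPos p q x y u ≠ lamPos p q x y v := by
  have h : (u : ℕ) ≠ v := fun e => h (Fin.ext e)
  have := u.2
  have := v.2
  have := y.2
  unfold lamPos
  split_ifs <;> omega

theorem arc_iff {n : ℕ} (τ : Equiv.Perm (Fin n)) : ArcCond τ ↔ StdCond τ ∧ NCr τ := by
  constructor
  · intro h
    have key : ∀ m x y : Fin n, τ.SameCycle x y →
        ((if τ m ≤ y then 1 else 0) - (if m < y then 1 else 0) : ℚ)
          = (if τ m ≤ x then 1 else 0) - (if m < x then 1 else 0) := by
      intro m x y hxy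
      exact InvSub_same (τ := τ)
        (f := fun x => ((if τ m ≤ x then 1 else 0) - (if m < x then 1 else 0) : ℚ)) (h m) hxy
    have hstd : StdCond τ := by
      intro m x hmx
      have k := key m m x hmx
      simp only [lt_irrefl, if_false, sub_zero, Fin.le_def, Fin.lt_def] at k
      unfold bt npos
      split_ifs at k <;> first | omega | (norm_num at k)
    refine ⟨hstd, ?_⟩
    intro a b c d hab hbc hcd hac hbd
    by_contra hn
    classical
    let F : Finset (Fin n) := Finset.univ.filter (fun v => τ.SameCycle a v ∧ v < b)
    have hF : F.Nonempty := ⟨a, by simp [F, hab, Equiv.Perm.SameCycle.refl]⟩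
    obtain ⟨m, hm, hmax⟩ := Finset.exists_max_image F id hF
    simp only [F, Finset.mem_filter, Finset.mem_univ, true_and, id] at hm hmax
    have s1 := hstd m c (hm.1.symm.trans hac)
    have s2 : ¬ (τ m < b) ∨ τ m ≤ m := by
      by_contra hcon
      push Not at hcon
      have := hmax (τ m) ⟨hm.1.apply_right, hcon.1⟩
      exact absurd hcon.2 (not_lt.2 this)
    have s3 : τ m ≠ b := fun e => hn (e ▸ hm.1.apply_right)
    have k := key m b d hbd
    unfold bt npos at s1
    simp only [Fin.le_def, Fin.lt_def, ne_eq, Fin.ext_iff] at *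
    split_ifs at k <;> first | omega | (norm_num at k)
  · rintro ⟨hs, hnc⟩ m x
    have e1 : τ.SameCycle m (τ m) := Equiv.Perm.sameCycle_apply_right.2 (Equiv.Perm.SameCycle.refl _ _)
    have e2 : τ.SameCycle x (τ x) := Equiv.Perm.sameCycle_apply_right.2 (Equiv.Perm.SameCycle.refl _ _)
    by_cases hmx : τ.SameCycle m x
    · have a1 := hs m x hmx
      have a2 := hs m (τ x) hmx.apply_right
      unfold bt npos at a1 a2
      simp only [Fin.le_def, Fin.lt_def]
      split_ifs <;> first | (exfalso; omega) | norm_num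
    · have n1 : ¬ τ.SameCycle x m := fun h => hmx h.symm
      have n2 : ¬ τ.SameCycle m (τ x) := fun h => hmx (h.trans e2.symm)
      have n3 : ¬ τ.SameCycle (τ m) x := fun h => hmx (e1.trans h)
      have n4 : ¬ τ.SameCycle (τ m) (τ x) := fun h => n2 (e1.trans h)
      have n5 : ¬ τ.SameCycle (τ x) m := fun h => n2 h.symm
      have n6 : ¬ τ.SameCycle x (τ m) := fun h => n3 h.symm
      have n7 : ¬ τ.SameCycle (τ x) (τ m) := fun h => n4 h.symm
      have f1 : (m : ℕ) ≠ x := fun h => hmx (Fin.ext h ▸ Equiv.Perm.SameCycle.refl _ _)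
      have f2 : (m : ℕ) ≠ τ x := fun h => hmx ((Fin.ext h : m = τ x) ▸ e2.symm)
      have f3 : (τ m : ℕ) ≠ x := fun h => hmx ((Fin.ext h : τ m = x) ▸ e1)
      have f4 : (τ m : ℕ) ≠ τ x := fun h => n2 ((Fin.ext h : τ m = τ x) ▸ e1)
      have c1 := ncr_crs hnc e1 e2 hmx
      have c2 := ncr_crs hnc e1 e2.symm n2
      simp only [Fin.le_def, Fin.lt_def]
      exact arc_nat f1 f2 f3 f4 c1 c2

variable {p q : ℕ}

theorem std_of_ann (hp : 0 < p) (hq : 0 < q) (τ : Equiv.Perm (Fin (p + q)))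
    (e y : Fin (p + q)) (ev : (e : ℕ) = p - 1) (yv : (y : ℕ) = p) (hτ : τ e = y)
    (h : AnnNC p q τ) : StdCond τ := by
  obtain ⟨⟨st1, st2⟩, -, nac2, -⟩ := h
  have hey : τ.SameCycle e y := hτ ▸
    Equiv.Perm.sameCycle_apply_right.2 (Equiv.Perm.SameCycle.refl _ _)
  have hxe : ∀ v : Fin (p + q), (v : ℕ) < p → (v : ℕ) ≤ e := fun v hv => by omega
  intro m x hmx
  by_cases hO : τ.SameCycle e m
  · -- the orbit of `e`
    set A : Set (Fin (p + q)) := {b | τ.SameCycle e b} with hA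
    have hAo : IsOrbit τ A := ⟨e, rfl⟩
    have hτA : ∀ v, v ∈ A → τ v ∈ A := fun v hv => Equiv.Perm.SameCycle.apply_right hv
    have heA : e ∈ A := Equiv.Perm.SameCycle.refl _ _
    have hyA : y ∈ A := hey
    obtain ⟨s1, s2⟩ := st1 A hAo
    obtain ⟨⟨u1, hu1, hu1'⟩, ⟨u2, hu2, hu2'⟩⟩ := st2 A hAo ⟨e, heA, by simp [extSet]; omega⟩
      ⟨y, hyA, le_of_eq yv.symm⟩
    have u1e : u1 = e := (hu1' e ⟨⟨heA, show (e : ℕ) < p by omega⟩, by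
      rw [hτ]; exact le_of_eq yv.symm⟩).symm
    have t1 : ∀ v s : Fin (p + q), v ∈ A → (v : ℕ) < p → (τ v : ℕ) < p → s ∈ A → (s : ℕ) < p →
        bt (npos (p + q)) v (τ v) s := by
      intro v s hv hvp hτv hs hsp
      have r1 := s1 v ⟨hv, hvp⟩
      have r2 : induced (⇑τ) (A ∩ extSet p q) v = τ v :=
        ind_eq_of_first (k := 1) (by omega) ⟨hτA v hv, hτv⟩ (by omega)
      have r3 := ind_bt (gammaExt p q) (npos (p + q)) (T := extSet p q) (S := A ∩ extSet p q) (b := v) npos_inj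
        (fun t ht => ext_lt ht) (fun t ht s hs => ext_bt ht hs) ⟨hv, hvp⟩ hvp s ⟨hs, hsp⟩ hsp
      rwa [← r1, r2] at r3
    have t2 : ∀ v s : Fin (p + q), v ∈ A → p ≤ (v : ℕ) → p ≤ (τ v : ℕ) → s ∈ A → p ≤ (s : ℕ) →
        bt (npos (p + q)) v (τ v) s := by
      intro v s hv hvp hτv hs hsp
      have r1 := s2 v ⟨hv, hvp⟩
      have r2 : induced (⇑τ) (A ∩ intSet p q) v = τ v :=
        ind_eq_of_first (k := 1) (by omega) ⟨hτA v hv, hτv⟩ (by omega)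
      have r3 := ind_bt (gammaInt p q) (npos (p + q)) (T := intSet p q) (S := A ∩ intSet p q) (b := v) npos_inj
        (fun t ht => int_ge ht) (fun t ht s hs => int_bt ht hs) ⟨hv, hvp⟩ hvp s ⟨hs, hsp⟩ hsp
      rwa [← r1, r2] at r3
    -- ascents
    have t1' : ∀ v : Fin (p + q), v ∈ A → (v : ℕ) < p → (τ v : ℕ) < p → (v : ℕ) < τ v := by
      intro v hv hvp hτv
      by_contra hle
      have b1 := t1 v e hv hvp hτv heA (by omega)
      have : v = e := Fin.ext (by unfold bt npos at b1; omega)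
      rw [this, hτ] at hτv
      omega
    have t2' : ∀ v : Fin (p + q), v ∈ A → p ≤ (v : ℕ) → p ≤ (τ v : ℕ) → (v : ℕ) < τ v := by
      intro v hv hvp hτv
      by_contra hle
      have b1 := t2 v y hv hvp hτv hyA (by omega)
      have e1 : τ v = y := Fin.ext (by unfold bt npos at b1; omega)
      have : v = e := τ.injective (e1.trans hτ.symm)
      rw [this] at hvp
      omega
    have hmA : m ∈ A := hO
    have hxA : x ∈ A := hO.trans hmx
    rcases Nat.lt_or_ge m p with hm | hm
    · rcases Nat.lt_or_ge (τ m) p with hm' | hm'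
      · have a1 := t1' m hmA hm hm'
        rcases Nat.lt_or_ge x p with hx | hx
        · exact t1 m x hmA hm hm' hxA hx
        · unfold bt npos; omega
      · have : m = e := (hu1' m ⟨⟨hmA, hm⟩, hm'⟩).trans u1e
        rw [this, hτ]
        unfold bt npos
        omega
    · rcases Nat.lt_or_ge (τ m) p with hm' | hm'
      · have mu : m = u2 := hu2' m ⟨⟨hmA, hm⟩, hm'⟩
        have g1 : ∀ v ∈ A, (v : ℕ) ≤ m := by
          obtain ⟨w, hw, hwmax⟩ := Set.exists_max_image A (fun v => (v : ℕ)) (Set.toFinite A) ⟨e, heA⟩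
          have hwp : p ≤ (w : ℕ) := by have := hwmax y hyA; (try simp only at this); omega
          have hwτ : (τ w : ℕ) < p := by
            by_contra hcon
            have := t2' w hw hwp (by omega)
            have := hwmax (τ w) (hτA w hw)
            (try simp only at this)
            omega
          have : w = m := (hu2' w ⟨⟨hw, hwp⟩, hwτ⟩).trans mu.symm
          subst this
          exact hwmax
        have g2 : ∀ v ∈ A, (τ m : ℕ) ≤ v := by
          obtain ⟨w, hw, hwmin⟩ := Set.exists_min_image A (fun v => (v : ℕ)) (Set.toFinite A) ⟨e, heA⟩
          have hwp : (w : ℕ) < p := by have := hwmin e heA; (try simp only at this); omega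
          have hu : τ⁻¹ w ∈ A := by
            have : τ.SameCycle e (τ (τ⁻¹ w)) := by
              rw [show τ (τ⁻¹ w) = w by simp]; exact hw
            exact this.of_apply_right
          have hτu : τ (τ⁻¹ w) = w := by simp
          have hup : p ≤ (τ⁻¹ w : Fin (p + q)).val := by
            by_contra hcon
            have a1 := t1' (τ⁻¹ w) hu (by omega) (by rw [hτu]; exact hwp)
            have := hwmin _ hu
            rw [hτu] at a1
            (try simp only at this)
            omega
          have : τ⁻¹ w = m := (hu2' _ ⟨⟨hu, hup⟩, by rw [hτu]; exact hwp⟩).trans mu.symm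
          rw [← this, hτu]
          exact hwmin
        have := g1 x hxA
        have := g2 x hxA
        unfold bt npos
        omega
      · have a1 := t2' m hmA hm hm'
        rcases Nat.lt_or_ge x p with hx | hx
        · unfold bt npos; omega
        · exact t2 m x hmA hm hm' hxA hx
  · -- other orbits
    by_contra hbt
    apply nac2
    have hτm : τ.SameCycle m (τ m) :=
      Equiv.Perm.sameCycle_apply_right.2 (Equiv.Perm.SameCycle.refl _ _)
    have ne : ∀ v, τ.SameCycle m v → (v : ℕ) ≠ e ∧ (v : ℕ) ≠ y := by
      intro v hv
      constructor
      · intro h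
        have h : v = e := Fin.ext h
        subst h
        exact hO hv.symm
      · intro h
        have h : v = y := Fin.ext h
        exact hO (hey.trans (h ▸ hv.symm))
    have hL : ∀ u v : Fin (p + q), τ.SameCycle m u → τ.SameCycle m v → (u : ℕ) < v →
        lamPos p q e y u < lamPos p q e y v := by
      intro u v hu hv huv
      have := ne u hu
      have := ne v hv
      have := u.2
      have := v.2
      unfold lamPos
      split_ifs <;> omega
    have mk : ∀ a b c : Fin (p + q), τ.SameCycle m a → τ.SameCycle m b → τ.SameCycle m c →
        (a : ℕ) < b → (b : ℕ) < c → (τ a = c ∨ τ c = b ∨ τ b = a) → AC2 p q τ := by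
      intro a b c ha hb hc hab hbc hh
      exact ac2_of (x := e) (y := y) (by omega) (by omega) (fun e => by subst e; omega)
        (fun e => by subst e; omega) (fun e => by subst e; omega) (hL a b ha hb hab)
        (hL b c hb hc hbc) hey (ha.symm.trans hb) (ha.symm.trans hc) (fun h => hO (h.trans ha.symm))
        hh
    have hmm := Equiv.Perm.SameCycle.refl τ m
    have hcases : ((m : ℕ) < x ∧ (x : ℕ) < τ m) ∨ ((τ m : ℕ) ≤ m ∧ (x : ℕ) < τ m) ∨
        ((τ m : ℕ) ≤ m ∧ (m : ℕ) < x) := by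
      unfold bt npos at hbt
      omega
    -- fixed points need separate treatment
    by_cases hfix : τ m = m
    · exfalso
      have : x = m := by
        obtain ⟨k, rfl⟩ := hmx.exists_nat_pow_eq
        clear hbt hcases hmx
        induction k with
        | zero => rfl
        | succ k ih => rw [pow_succ', Equiv.Perm.mul_apply, ih, hfix]
      rw [this, hfix] at hcases
      omega
    · have hfix' : (τ m : ℕ) ≠ m := fun h => hfix (Fin.ext h)
      rcases hcases with ⟨h1, h2⟩ | ⟨h1, h2⟩ | ⟨h1, h2⟩
      · exact mk m x (τ m) hmm hmx hτm h1 h2 (Or.inl rfl)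
      · exact mk x (τ m) m hmx hτm hmm h2 (by omega) (Or.inr (Or.inl rfl))
      · exact mk (τ m) m x hτm hmm hmx (by omega) h2 (Or.inr (Or.inr rfl))

theorem ncr_of_ann (hp : 0 < p) (hq : 0 < q) (τ : Equiv.Perm (Fin (p + q)))
    (e y : Fin (p + q)) (ev : (e : ℕ) = p - 1) (yv : (y : ℕ) = p) (hτ : τ e = y)
    (h : AnnNC p q τ) : NCr τ := by
  have hstd := std_of_ann hp hq τ e y ev yv hτ h
  obtain ⟨-, nac1, nac2, nac3⟩ := h
  have hey : τ.SameCycle e y := hτ ▸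
    Equiv.Perm.sameCycle_apply_right.2 (Equiv.Perm.SameCycle.refl _ _)
  -- crossing of an orbit with the orbit of `e`
  have cross : ∀ b d a c : Fin (p + q), τ.SameCycle b d → τ.SameCycle e a → τ.SameCycle e c →
      ¬ τ.SameCycle e b → (b : ℕ) < c → (c : ℕ) < d → ((a : ℕ) < b ∨ (d : ℕ) < a) → False := by
    intro b d a c hbd hea hec heb hbc hcd ha
    have neb : (b : ℕ) ≠ e := fun h => by
      have h : b = e := Fin.ext h
      subst h; exact heb (Equiv.Perm.SameCycle.refl _ _)
    have ned : (d : ℕ) ≠ e := fun h => by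
      have h : d = e := Fin.ext h
      subst h; exact heb hbd.symm
    have neb' : (b : ℕ) ≠ y := fun h => by
      have h : b = y := Fin.ext h
      subst h; exact heb hey
    have ned' : (d : ℕ) ≠ y := fun h => by
      have h : d = y := Fin.ext h
      exact heb (hey.trans (h ▸ hbd.symm))
    rcases Nat.lt_or_ge d p with hd | hd
    · exact nac1 (ac1_of (a := b) (b := c) (c := d) (d := e) hbc hcd
        (show (d : ℕ) < e by omega) (Or.inl (by omega)) hbd hec.symm
        (fun h => heb (hec.trans h.symm)))
    · rcases Nat.lt_or_ge b p with hb | hb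
      · -- connecting orbit
        have hbe : (b : ℕ) < e := by omega
        have hyd : (y : ℕ) < d := by omega
        have hae : (a : ℕ) ≠ e := by omega
        have hay : (a : ℕ) ≠ y := by omega
        have hdv := d.2
        have hav := a.2
        have hne : ∀ u v : Fin (p + q), (u : ℕ) ≠ v → u ≠ v := fun u v h h' => h (by rw [h'])
        rcases ha with ha | ha
        · refine nac2 (ac2_of (a := e) (b := a) (c := y) (x := b) (y := d) hb hd
            (hne _ _ hae.symm) (hne _ _ hay) (hne _ _ (by omega)) ?_ ?_ hbd hea hey
            (fun h => heb h.symm) (Or.inl hτ))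
          all_goals
            unfold lamPos
            split_ifs <;> omega
        · refine nac2 (ac2_of (a := e) (b := a) (c := y) (x := b) (y := d) hb hd
            (hne _ _ hae.symm) (hne _ _ hay) (hne _ _ (by omega)) ?_ ?_ hbd hea hey
            (fun h => heb h.symm) (Or.inl hτ))
          all_goals
            unfold lamPos
            split_ifs <;> omega
      · exact nac1 (ac1_of (a := y) (b := b) (c := c) (d := d) (show (y : ℕ) < b by omega) hbc hcd
          (Or.inr (by omega)) (hey.symm.trans hec) hbd (fun h => heb (hey.trans h)))
  intro a b c d hab hbc hcd hac hbd
  by_contra hn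
  simp only [Fin.lt_def] at hab hbc hcd
  by_cases ha : τ.SameCycle e a
  · exact cross b d a c hbd ha (ha.trans hac) (fun h => hn (ha.symm.trans h)) hbc hcd (Or.inl hab)
  · by_cases hb : τ.SameCycle e b
    · exact cross a c d b hac (hb.trans hbd) hb ha hab hbc (Or.inr hcd)
    · have ne : ∀ u v, ¬ τ.SameCycle e u → τ.SameCycle u v → (v : ℕ) ≠ e ∧ (v : ℕ) ≠ y := by
        intro u v hu hv
        constructor
        · intro h
          have h : v = e := Fin.ext h
          subst h
          exact hu hv.symm
        · intro h
          have h : v = y := Fin.ext h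
          exact hu (hey.trans (h ▸ hv.symm))
      have na := ne a a ha (Equiv.Perm.SameCycle.refl _ _)
      have nb := ne b b hb (Equiv.Perm.SameCycle.refl _ _)
      have nc := ne a c ha hac
      have nd := ne b d hb hbd
      have hL : ∀ u v : Fin (p + q), (u : ℕ) ≠ e ∧ (u : ℕ) ≠ y → (v : ℕ) ≠ e ∧ (v : ℕ) ≠ y →
          (u : ℕ) < v → lamPos p q e y u < lamPos p q e y v := by
        intro u v hu hv huv
        have := u.2
        have := v.2
        unfold lamPos
        split_ifs <;> omega
      exact nac3 (ac3_of (x := e) (y := y) (by omega) (by omega) (hL a b na nb hab)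
        (hL b c nb nc hbc) (hL c d nc nd hcd) hey hac hbd ha hb hn)

theorem annStandard_of (τ : Equiv.Perm (Fin (p + q))) (hs : StdCond τ) : AnnStandard p q τ := by
  constructor
  · rintro A ⟨a, rfl⟩
    have hT : ∀ t ∈ {b | τ.SameCycle a b}, τ t ∈ {b | τ.SameCycle a b} :=
      fun t ht => Equiv.Perm.SameCycle.apply_right ht
    have hbt : ∀ t ∈ {b | τ.SameCycle a b}, ∀ s ∈ {b | τ.SameCycle a b},
        bt (npos (p + q)) t (τ t) s := fun t ht s hs' => hs t s (ht.symm.trans hs')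
    constructor
    · intro b hb
      refine (ind_eq_of_bt τ (npos (p + q)) npos_inj hT hbt (Set.inter_subset_left) hb
        (ind_mem _ hb) ?_)
      intro s hs
      exact ind_bt (gammaExt p q) (npos (p + q)) (T := extSet p q) npos_inj
        (fun t ht => ext_lt ht) (fun t ht s hs => ext_bt ht hs) hb hb.2 s hs hs.2
    · intro b hb
      refine (ind_eq_of_bt τ (npos (p + q)) npos_inj hT hbt (Set.inter_subset_left) hb
        (ind_mem _ hb) ?_)
      intro s hs
      exact ind_bt (gammaInt p q) (npos (p + q)) (T := intSet p q) npos_inj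
        (fun t ht => int_ge ht) (fun t ht s hs => int_bt ht hs) hb hb.2 s hs hs.2
  · rintro A ⟨a, rfl⟩ ⟨u, hu, hu'⟩ ⟨v, hv, hv'⟩
    have hu' : (u : ℕ) < p := hu'
    have hv' : p ≤ (v : ℕ) := hv'
    set A : Set (Fin (p + q)) := {b | τ.SameCycle a b} with hA
    have hT : ∀ t ∈ A, τ t ∈ A := fun t ht => Equiv.Perm.SameCycle.apply_right ht
    have hbt : ∀ t ∈ A, ∀ s ∈ A, bt (npos (p + q)) t (τ t) s :=
      fun t ht s hs' => hs t s (ht.symm.trans hs')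
    constructor
    · obtain ⟨w, hw, hwmax⟩ := Set.exists_max_image (A ∩ extSet p q) (fun v => (v : ℕ))
        (Set.toFinite _) ⟨u, hu, hu'⟩
      have hwp : (w : ℕ) < p := hw.2
      refine ⟨w, ⟨hw, ?_⟩, ?_⟩
      · by_contra hcon
        have hcon : ¬ p ≤ (τ w : ℕ) := hcon
        have h1 := hwmax (τ w) ⟨hT w hw.1, show (τ w : ℕ) < p by omega⟩
        have h2 := hbt w hw.1 v hv
        unfold bt npos at h2
        (try simp only at h1)
        omega
      · rintro w' ⟨hw', hw''⟩
        have hw'' : p ≤ (τ w' : ℕ) := hw''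
        have hwp' : (w' : ℕ) < p := hw'.2
        have h1 := hwmax w' hw'
        have h2 := hbt w' hw'.1 w hw.1
        unfold bt npos at h2
        (try simp only at h1)
        exact Fin.ext (by omega)
    · obtain ⟨w, hw, hwmax⟩ := Set.exists_max_image A (fun v => (v : ℕ))
        (Set.toFinite _) ⟨u, hu⟩
      have h0 := hwmax v hv
      (try simp only at h0)
      have hwp : p ≤ (w : ℕ) := by omega
      refine ⟨w, ⟨⟨hw, hwp⟩, ?_⟩, ?_⟩
      · have h1 := hwmax (τ w) (hT w hw)
        have h2 := hbt w hw u hu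
        unfold bt npos at h2
        (try simp only at h1)
        show (τ w : ℕ) < p
        omega
      · rintro w' ⟨hw', hw''⟩
        have hw'' : (τ w' : ℕ) < p := hw''
        have hwp' : p ≤ (w' : ℕ) := hw'.2
        have h1 := hwmax w' hw'.1
        have h2 := hbt w' hw'.1 w hw
        unfold bt npos at h2
        (try simp only at h1)
        exact Fin.ext (by omega)

/-- A swapped pair is a full trace of an orbit. -/
theorem swap_sep {α : Type*} [Finite α] {f : Equiv.Perm α} {S : Set α} {x y s : α} (hx : x ∈ S)
    (hy : y ∈ S) (hs : s ∈ S) (h1 : induced (⇑f) S x = y) (h2 : induced (⇑f) S y = x)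
    (hsx : s ≠ x) (hsy : s ≠ y) : ¬ f.SameCycle x s := by
  intro h
  have := ind_reach f (B := S) (T := {x, y}) (by rintro s (rfl | rfl) <;> assumption)
      (by rintro s (rfl | rfl) <;> simp [*]) (Set.mem_insert x _) hs h
  rcases this with r | r
  · exact hsx r
  · exact hsy r

theorem not_ac1 (τ : Equiv.Perm (Fin (p + q))) (hnc : NCr τ) :
    ¬ AC1 p q τ := by
  rintro ⟨a, b, c, d, hne, ⟨g1, g2, g3, g4⟩, ⟨s1, s2, s3, s4⟩⟩
  simp at hne
  obtain ⟨⟨n1, n2, n3⟩, ⟨n4, n5⟩, n6⟩ := hne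
  set S : Set (Fin (p + q)) := {a, b, c, d} with hS
  have ma : a ∈ S := by simp [hS]
  have mb : b ∈ S := by simp [hS]
  have mc : c ∈ S := by simp [hS]
  have md : d ∈ S := by simp [hS]
  have sac : τ.SameCycle a c := s1 ▸ ind_same τ ma
  have sbd : τ.SameCycle b d := s3 ▸ ind_same τ mb
  have hn : ¬ τ.SameCycle a b := swap_sep ma mc mb s1 s2 (Ne.symm n1) n4
  apply ncr_crs hnc sac sbd hn
  have v1 : (a : ℕ) ≠ b := fun h => n1 (Fin.ext h)
  have v2 : (a : ℕ) ≠ c := fun h => n2 (Fin.ext h)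
  have v3 : (a : ℕ) ≠ d := fun h => n3 (Fin.ext h)
  have v4 : (b : ℕ) ≠ c := fun h => n4 (Fin.ext h)
  have v5 : (b : ℕ) ≠ d := fun h => n5 (Fin.ext h)
  have v6 : (c : ℕ) ≠ d := fun h => n6 (Fin.ext h)
  have all : ∀ u ∈ S, ∀ s ∈ S, bt (npos (p + q)) u (induced (⇑(gammaAnn p q)) S u) s := by
    rcases Nat.lt_or_ge a p with h | h
    · have hb := (ann_ext_bt ma h).1
      rw [g1] at hb
      have hc := (ann_ext_bt mb hb).1
      rw [g2] at hc
      have hd := (ann_ext_bt mc hc).1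
      rw [g3] at hd
      have hall : ∀ u ∈ S, (u : ℕ) < p := by
        rintro u (rfl | rfl | rfl | rfl) <;> assumption
      exact fun u hu s hs => (ann_ext_bt hu (hall u hu)).2 s hs (hall s hs)
    · have hb := (ann_int_bt ma h).1
      rw [g1] at hb
      have hc := (ann_int_bt mb hb).1
      rw [g2] at hc
      have hd := (ann_int_bt mc hc).1
      rw [g3] at hd
      have hall : ∀ u ∈ S, p ≤ (u : ℕ) := by
        rintro u (rfl | rfl | rfl | rfl) <;> assumption
      exact fun u hu s hs => (ann_int_bt hu (hall u hu)).2 s hs (hall s hs)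
  have A1 := all a ma c mc
  have A2 := all a ma d md
  have A3 := all b mb d md
  have A4 := all b mb a ma
  have A5 := all c mc a ma
  have A6 := all c mc b mb
  rw [g1] at A1 A2
  rw [g2] at A3 A4
  rw [g3] at A5 A6
  exact bt4_crs (pos := npos (p + q)) v1 v2 v3 v4 v5 v6 A1 A2 A3 A4 A5 A6

theorem not_ac2 (τ : Equiv.Perm (Fin (p + q))) (hs : StdCond τ) (hnc : NCr τ) :
    ¬ AC2 p q τ := by
  rintro ⟨a, b, c, x, y, hne, hx, hy, ⟨g1, g2, g3⟩, ⟨s1, s2, s3⟩, ⟨s4, s5⟩⟩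
  simp at hne
  obtain ⟨⟨n1, n2, n3, n4⟩, ⟨n5, n6, n7⟩, ⟨n8, n9⟩, n10⟩ := hne
  have hx : (x : ℕ) < p := hx
  have hy : p ≤ (y : ℕ) := hy
  have hxS : x ∉ ({a, b, c} : Set (Fin (p + q))) := by simp [Ne.symm n3, Ne.symm n6, Ne.symm n8]
  have hyS : y ∉ ({a, b, c} : Set (Fin (p + q))) := by simp [Ne.symm n4, Ne.symm n7, Ne.symm n9]
  have L1 := lam_ind_bt hx hy hxS hyS (b := a) (by simp) c (by simp)
  have L2 := lam_ind_bt hx hy hxS hyS (b := b) (by simp) a (by simp)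
  have L3 := lam_ind_bt hx hy hxS hyS (b := c) (by simp) b (by simp)
  rw [g1] at L1
  rw [g2] at L2
  rw [g3] at L3
  set S : Set (Fin (p + q)) := {a, b, c, x, y} with hS
  have ma : a ∈ S := by simp [hS]
  have mb : b ∈ S := by simp [hS]
  have mc : c ∈ S := by simp [hS]
  have mx : x ∈ S := by simp [hS]
  have my : y ∈ S := by simp [hS]
  have sac : τ.SameCycle a c := s1 ▸ ind_same τ ma
  have scb : τ.SameCycle c b := s2 ▸ ind_same τ mc
  have sxy : τ.SameCycle x y := s4 ▸ ind_same τ mx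
  have hxa : ¬ τ.SameCycle x a := swap_sep mx my ma s4 s5 n3 n4
  have hxb : ¬ τ.SameCycle x b := swap_sep mx my mb s4 s5 n6 n7
  have hxc : ¬ τ.SameCycle x c := swap_sep mx my mc s4 s5 n8 n9
  have B : ∀ u ∈ S, τ.SameCycle a u → ∀ s ∈ S, τ.SameCycle a s →
      bt (npos (p + q)) u (induced (⇑τ) S u) s := by
    intro u hu hau
    exact ind_bt τ (npos (p + q)) (T := {b | τ.SameCycle a b}) npos_inj
      (fun t ht => Equiv.Perm.SameCycle.apply_right ht)
      (fun t ht s hs' => hs t s (ht.symm.trans hs')) hu hau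
  have B1 := B a ma (Equiv.Perm.SameCycle.refl _ _) b mb (sac.trans scb)
  have B2 := B c mc sac a ma (Equiv.Perm.SameCycle.refl _ _)
  have B3 := B b mb (sac.trans scb) c mc sac
  rw [s1] at B1
  rw [s2] at B2
  rw [s3] at B3
  have C1 := ncr_crs hnc sxy sac hxa
  have C2 := ncr_crs hnc sxy scb hxc
  have C3 := ncr_crs hnc sxy (sac.trans scb) hxa
  have C1' := ncr_crs hnc sxy sac.symm hxc
  have C2' := ncr_crs hnc sxy scb.symm hxb
  have C3' := ncr_crs hnc sxy (sac.trans scb).symm hxb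
  have v1 : (a : ℕ) ≠ b := fun h => n1 (Fin.ext h)
  have v2 : (a : ℕ) ≠ c := fun h => n2 (Fin.ext h)
  have v3 : (a : ℕ) ≠ x := fun h => n3 (Fin.ext h)
  have v4 : (a : ℕ) ≠ y := fun h => n4 (Fin.ext h)
  have v5 : (b : ℕ) ≠ c := fun h => n5 (Fin.ext h)
  have v6 : (b : ℕ) ≠ x := fun h => n6 (Fin.ext h)
  have v7 : (b : ℕ) ≠ y := fun h => n7 (Fin.ext h)
  have v8 : (c : ℕ) ≠ x := fun h => n8 (Fin.ext h)
  have v9 : (c : ℕ) ≠ y := fun h => n9 (Fin.ext h)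
  have hxy : (x : ℕ) < y := by omega
  have i1 := side_iff hxy v3 v4 v8 v9 C1 C1'
  have i2 := side_iff hxy v8 v9 v6 v7 C2 C2'
  have w1 := lamPos_ne hx hy v3 v4 v6 v7 n1
  have w2 := lamPos_ne hx hy v3 v4 v8 v9 n2
  have w3 := lamPos_ne hx hy v6 v7 v8 v9 n5
  exact bt3_false (lamPos_mono hx hy v3 v4 v6 v7 (i1.trans i2))
    (lamPos_mono hx hy v6 v7 v8 v9 i2.symm) (lamPos_mono hx hy v3 v4 v8 v9 i1) w1 w2 w3 v1 v2 v5
    (bt3_cyc w1 w2 w3 L1 L2) (bt3_cyc (pos := npos (p + q)) v2 v1 v5.symm B1 B2)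

theorem not_ac3 (τ : Equiv.Perm (Fin (p + q))) (hnc : NCr τ) :
    ¬ AC3 p q τ := by
  rintro ⟨a, b, c, d, x, y, hne, hx, hy, ⟨g1, g2, g3, g4⟩, ⟨s1, s2, s3, s4⟩, ⟨s5, s6⟩⟩
  simp at hne
  obtain ⟨⟨n1, n2, n3, n4, n5⟩, ⟨n6, n7, n8, n9⟩, ⟨n10, n11, n12⟩, ⟨n13, n14⟩, n15⟩ := hne
  have hx : (x : ℕ) < p := hx
  have hy : p ≤ (y : ℕ) := hy
  have hxS : x ∉ ({a, b, c, d} : Set (Fin (p + q))) := by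
    simp [Ne.symm n4, Ne.symm n8, Ne.symm n11, Ne.symm n13]
  have hyS : y ∉ ({a, b, c, d} : Set (Fin (p + q))) := by
    simp [Ne.symm n5, Ne.symm n9, Ne.symm n12, Ne.symm n14]
  have L1 := lam_ind_bt hx hy hxS hyS (b := a) (by simp) c (by simp)
  have L2 := lam_ind_bt hx hy hxS hyS (b := a) (by simp) d (by simp)
  have L3 := lam_ind_bt hx hy hxS hyS (b := b) (by simp) d (by simp)
  have L4 := lam_ind_bt hx hy hxS hyS (b := b) (by simp) a (by simp)
  have L5 := lam_ind_bt hx hy hxS hyS (b := c) (by simp) a (by simp)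
  have L6 := lam_ind_bt hx hy hxS hyS (b := c) (by simp) b (by simp)
  rw [g1] at L1 L2
  rw [g2] at L3 L4
  rw [g3] at L5 L6
  set S : Set (Fin (p + q)) := {a, b, c, d, x, y} with hS
  have ma : a ∈ S := by simp [hS]
  have mb : b ∈ S := by simp [hS]
  have mc : c ∈ S := by simp [hS]
  have md : d ∈ S := by simp [hS]
  have mx : x ∈ S := by simp [hS]
  have my : y ∈ S := by simp [hS]
  have sac : τ.SameCycle a c := s1 ▸ ind_same τ ma
  have sbd : τ.SameCycle b d := s3 ▸ ind_same τ mb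
  have sxy : τ.SameCycle x y := s5 ▸ ind_same τ mx
  have hxa : ¬ τ.SameCycle x a := swap_sep mx my ma s5 s6 n4 n5
  have hxb : ¬ τ.SameCycle x b := swap_sep mx my mb s5 s6 n8 n9
  have hxc : ¬ τ.SameCycle x c := swap_sep mx my mc s5 s6 n11 n12
  have hxd : ¬ τ.SameCycle x d := swap_sep mx my md s5 s6 n13 n14
  have hab : ¬ τ.SameCycle a b := swap_sep ma mc mb s1 s2 (Ne.symm n1) n6
  have C0 := ncr_crs hnc sac sbd hab
  have C1 := ncr_crs hnc sxy sac hxa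
  have C1' := ncr_crs hnc sxy sac.symm hxc
  have C2 := ncr_crs hnc sxy sbd hxb
  have C2' := ncr_crs hnc sxy sbd.symm hxd
  have fv : ∀ u v : Fin (p + q), u ≠ v → (u : ℕ) ≠ v := fun u v h e => h (Fin.ext e)
  have ax := fv _ _ n4
  have ay := fv _ _ n5
  have bx := fv _ _ n8
  have yb := fv _ _ n9
  have cx := fv _ _ n11
  have cy := fv _ _ n12
  have dx := fv _ _ n13
  have dy := fv _ _ n14
  have K := bt4_crs (lamPos_ne hx hy ax ay bx yb n1) (lamPos_ne hx hy ax ay cx cy n2)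
    (lamPos_ne hx hy ax ay dx dy n3) (lamPos_ne hx hy bx yb cx cy n6)
    (lamPos_ne hx hy bx yb dx dy n7) (lamPos_ne hx hy cx cy dx dy n10) L1 L2 L3 L4 L5 L6
  have hxy : (x : ℕ) < y := by omega
  have iac := side_iff hxy ax ay cx cy C1 C1'
  have ibd := side_iff hxy bx yb dx dy C2 C2'
  by_cases hA : (x : ℕ) < a ∧ (a : ℕ) < y
  · by_cases hB : (x : ℕ) < b ∧ (b : ℕ) < y
    · have hC := iac.1 hA
      have hD := ibd.1 hB
      apply C0
      unfold crs at K ⊢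
      rwa [lamPos_mono hx hy ax ay bx yb (iff_of_true hA hB),
        lamPos_mono hx hy bx yb cx cy (iff_of_true hB hC),
        lamPos_mono hx hy cx cy dx dy (iff_of_true hC hD),
        lamPos_mono hx hy dx dy ax ay (iff_of_true hD hA)] at K
    · have a1 := lamPos_in hx hy hA
      have a2 := lamPos_in hx hy (iac.1 hA)
      have a3 := lamPos_out hx hy bx yb hB
      have a4 := lamPos_out hx hy dx dy (fun h => hB (ibd.2 h))
      clear * - K a1 a2 a3 a4
      unfold crs at K
      omega
  · by_cases hB : (x : ℕ) < b ∧ (b : ℕ) < y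
    · have a1 := lamPos_in hx hy hB
      have a2 := lamPos_in hx hy (ibd.1 hB)
      have a3 := lamPos_out hx hy ax ay hA
      have a4 := lamPos_out hx hy cx cy (fun h => hA (iac.2 h))
      clear * - K a1 a2 a3 a4
      unfold crs at K
      omega
    · have hC : ¬ ((x : ℕ) < c ∧ (c : ℕ) < y) := fun h => hA (iac.2 h)
      have hD : ¬ ((x : ℕ) < d ∧ (d : ℕ) < y) := fun h => hB (ibd.2 h)
      apply C0
      unfold crs at K ⊢
      rwa [lamPos_mono hx hy ax ay bx yb (iff_of_false hA hB),
        lamPos_mono hx hy bx yb cx cy (iff_of_false hB hC),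
        lamPos_mono hx hy cx cy dx dy (iff_of_false hC hD),
        lamPos_mono hx hy dx dy ax ay (iff_of_false hD hA)] at K

theorem ann_of (τ : Equiv.Perm (Fin (p + q))) (hs : StdCond τ) (hnc : NCr τ) : AnnNC p q τ := by
  exact ⟨annStandard_of τ hs, not_ac1 τ hnc, not_ac2 τ hs hnc, not_ac3 τ hnc⟩

end Final
/-- Lemma 6.4: if `τ` is a permutation of `[p+q]` with `τ(p) = p+1` (in 0-indexed terms,
`τ(p-1) = p`), then `τ ∈ S_ann-nc(p,q)` iff `#(τ) + #(τ⁻¹γ) = p+q`. -/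
theorem stmt_18 (p q : ℕ) (hp : 0 < p) (hq : 0 < q)
    (τ : Equiv.Perm (Fin (p + q))) (hτ : τ ⟨p - 1, by omega⟩ = ⟨p, by omega⟩) :
    AnnNC p q τ ↔ numOrbits τ + numOrbits (τ⁻¹ * gammaAnn p q) = p + q := by
  set e : Fin (p + q) := ⟨p - 1, by omega⟩ with he
  set y : Fin (p + q) := ⟨p, by omega⟩ with hy
  have h1 : AnnNC p q τ ↔ ArcCond τ := by
    rw [arc_iff]
    exact ⟨fun h => ⟨std_of_ann hp hq τ e y rfl rfl hτ h, ncr_of_ann hp hq τ e y rfl rfl hτ h⟩, fun h => ann_of τ h.1 h.2⟩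
  set K := τ⁻¹ * gammaAnn p q with hK
  let l : Fin (p + q) := ⟨p + q - 1, by omega⟩
  have hKv : ∀ v, τ (K v) = gammaAnn p q v := fun v => by simp [hK]
  have hel : e ≠ l := fun h => by
    have := congrArg Fin.val h
    simp only [e, l] at this
    omega
  have hKl : K l = e := by
    apply τ.injective
    rw [hKv, hτ]
    apply Fin.ext
    have hl : p ≤ (l : ℕ) := show p ≤ p + q - 1 by omega
    rw [ann_int hl, int_val hl]
    simp only [l, y]
    split_ifs <;> omega
  have h2 := numOrbits_swap K e l hel hKl
  have h3 := disc_iff (by omega) τ (K * Equiv.swap e l) (by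
    intro x hx
    rw [Equiv.Perm.mul_apply, hKv]
    by_cases hxe : x = e
    · subst hxe
      rw [Equiv.swap_apply_left, ← hKv, hKl, hτ]
      simp only [e, y]
      omega
    · have hxe' : (x : ℕ) ≠ p - 1 := fun h => hxe (Fin.ext h)
      have hxl : x ≠ l := fun h => by
        have := congrArg Fin.val h
        simp only [l] at this
        omega
      rw [Equiv.swap_apply_of_ne_of_ne hxe hxl]
      rcases Nat.lt_or_ge x p with hxp | hxp
      · rw [ann_ext hxp, ext_val hxp]
        split_ifs <;> omega
      · rw [ann_int hxp, int_val hxp]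
        split_ifs; omega) (by
    intro x hx
    have hxl : x = l := Fin.ext (by simp only [l]; omega)
    have hep : (e : ℕ) < p := show p - 1 < p by omega
    rw [hxl, Equiv.Perm.mul_apply, hKv, Equiv.swap_apply_right, ann_ext hep, ext_val hep]
    simp only [e]
    split_ifs <;> omega)
  rw [h1, h3, h2]
  omega
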